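/- Each S_{2i,j} (1 ≤ i ≤ n²/2, j ∈ {0,1}) is a simple left u-module of k-dimension n²−2i+1 (in particular of odd dimension), and every simple left u-module is isomorphic to some S_{2i,j}; in particular u has exactly n² isomorphism classes of simple modules, and every simple u-module has odd dimension. -/

import Mathlib

noncomputable section

open scoped TensorProduct

namespace QFL

/-- The defining relations of the quasi-Frobenius-Lusztig kernel `ũ_q(sl₂)`,
on the free algebra on four generators `K = ι 0`, `K̂ = ι 1`, `E = ι 2`, `F = ι 3`. -/
inductive Rel (k : Type) [Field k] (n : ℕ) (q : k) :
    FreeAlgebra k (Fin 4) → FreeAlgebra k (Fin 4) → Prop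
  | Kord : Rel k n q (FreeAlgebra.ι k (0 : Fin 4) ^ n) 1
  | Khord : Rel k n q (FreeAlgebra.ι k (1 : Fin 4) ^ n)
      ((FreeAlgebra.ι k (0 : Fin 4) ^ (n - 1)) ^ 2)
  | KKh : Rel k n q (FreeAlgebra.ι k (0 : Fin 4) * FreeAlgebra.ι k (1 : Fin 4))
      (FreeAlgebra.ι k (1 : Fin 4) * FreeAlgebra.ι k (0 : Fin 4))
  | KE : Rel k n q
      (FreeAlgebra.ι k (0 : Fin 4) * FreeAlgebra.ι k (2 : Fin 4) *
        FreeAlgebra.ι k (0 : Fin 4) ^ (n - 1))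
      (q ^ n • FreeAlgebra.ι k (2 : Fin 4))
  | KF : Rel k n q
      (FreeAlgebra.ι k (0 : Fin 4) * FreeAlgebra.ι k (3 : Fin 4) *
        FreeAlgebra.ι k (0 : Fin 4) ^ (n - 1))
      ((q ^ n)⁻¹ • FreeAlgebra.ι k (3 : Fin 4))
  | KhE : Rel k n q
      (FreeAlgebra.ι k (1 : Fin 4) * FreeAlgebra.ι k (2 : Fin 4) *
        FreeAlgebra.ι k (1 : Fin 4) ^ (n ^ 2 - 1))
      ((q ^ n * (q ^ 2)⁻¹) • FreeAlgebra.ι k (2 : Fin 4))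
  | KhF : Rel k n q
      (FreeAlgebra.ι k (1 : Fin 4) * FreeAlgebra.ι k (3 : Fin 4) *
        FreeAlgebra.ι k (1 : Fin 4) ^ (n ^ 2 - 1))
      (((q ^ n)⁻¹ * q ^ 2) • FreeAlgebra.ι k (3 : Fin 4))
  | Enil : Rel k n q (FreeAlgebra.ι k (2 : Fin 4) ^ n ^ 2) 0
  | Fnil : Rel k n q (FreeAlgebra.ι k (3 : Fin 4) ^ n ^ 2) 0
  | EF : Rel k n q
      (FreeAlgebra.ι k (3 : Fin 4) * FreeAlgebra.ι k (2 : Fin 4) -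
        q⁻¹ • (FreeAlgebra.ι k (2 : Fin 4) * FreeAlgebra.ι k (3 : Fin 4)))
      (1 - FreeAlgebra.ι k (0 : Fin 4) ^ (n - 1) * FreeAlgebra.ι k (1 : Fin 4))

/-- The algebra `ũ_q(sl₂)` as the quotient of the free algebra by the defining relations. -/
abbrev U (k : Type) [Field k] (n : ℕ) (q : k) := RingQuot (Rel k n q)

variable (k : Type) [Field k] (n : ℕ) (q : k)

def K : U k n q := RingQuot.mkAlgHom k (Rel k n q) (FreeAlgebra.ι k (0 : Fin 4))
def Kh : U k n q := RingQuot.mkAlgHom k (Rel k n q) (FreeAlgebra.ι k (1 : Fin 4))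
def E : U k n q := RingQuot.mkAlgHom k (Rel k n q) (FreeAlgebra.ι k (2 : Fin 4))
def F : U k n q := RingQuot.mkAlgHom k (Rel k n q) (FreeAlgebra.ι k (3 : Fin 4))

/-- `K⁻¹ = K^(n-1)`. -/
def Kinv : U k n q := K k n q ^ (n - 1)
/-- `K̂⁻¹ = K̂^(n²-1)`. -/
def Khinv : U k n q := Kh k n q ^ (n ^ 2 - 1)

/-- `φ_{2i} = (2/n²) Σ_{t<n²/2} q^{-2it} (K⁻¹K̂)^t`. -/
def phi (i : ℕ) : U k n q :=
  ((n ^ 2 : k)⁻¹ * 2) • ∑ t ∈ Finset.range (n ^ 2 / 2),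
    (q⁻¹ ^ (2 * i * t)) • (Kinv k n q * Kh k n q) ^ t

/-- `𝟙₀ = (1/2)(1 + KK̂^(n/2))` and `𝟙₁ = (1/2)(1 - KK̂^(n/2))`. -/
def oneJ (j : ℕ) : U k n q :=
  if j = 0 then (2 : k)⁻¹ • (1 + K k n q * Kh k n q ^ (n / 2))
  else (2 : k)⁻¹ • (1 - K k n q * Kh k n q ^ (n / 2))

/-- The idempotent `e_{2i,j} = φ_{2i} 𝟙_j`. -/
def eIdem (i j : ℕ) : U k n q := phi k n q i * oneJ k n q j

/-- `α_{2i,j} = F^(n²-1) e_{2i,j}`. -/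
def alpha (i j : ℕ) : U k n q := F k n q ^ (n ^ 2 - 1) * eIdem k n q i j

/-- `β_{2i,j} = E^(2i-2) α_{2i,j}`. -/
def beta (i j : ℕ) : U k n q := E k n q ^ (2 * i - 2) * alpha k n q i j

/-- The Gaussian number `s_q = 1 + q + ⋯ + q^(s-1)`. -/
def gauss (x : k) (s : ℕ) : k := ∑ t ∈ Finset.range s, x ^ t

/-- The span of the PBW-type monomials `F^a K^c K̂^d E^b` with `a ≤ n²-2`, `b ≤ n²-1`,
`c ≤ n-1`, `d ≤ n²-1`. -/
def pbw : Submodule k (U k n q) :=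
  Submodule.span k {x | ∃ a b c d : ℕ, a ≤ n ^ 2 - 2 ∧ b ≤ n ^ 2 - 1 ∧ c ≤ n - 1 ∧
    d ≤ n ^ 2 - 1 ∧ x = F k n q ^ a * K k n q ^ c * Kh k n q ^ d * E k n q ^ b}

/-- `γ_{2i,j}`: the unique element of the PBW span with `F·γ = β_{2i,j}`. -/
def gam (i j : ℕ) : U k n q :=
  @dite _ (∃! x, x ∈ pbw k n q ∧ F k n q * x = beta k n q i j)
    (Classical.propDecidable _) (fun h => h.choose) (fun _ => 0)

/-- The left ideal `P_{2i,j} = u·γ_{2i,j}`. -/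
def P (i j : ℕ) : Submodule (U k n q) (U k n q) :=
  Submodule.span (U k n q) {gam k n q i j}

/-- `S_{2i,j} = Soc(P_{2i,j})`, the sum of all simple submodules of `P_{2i,j}`. -/
def S (i j : ℕ) : Submodule (U k n q) (U k n q) :=
  sSup {N : Submodule (U k n q) (U k n q) | N ≤ P k n q i j ∧ IsSimpleModule (U k n q) N}

end QFL

/-!
The elements `g = K⁻¹K̂` and `s = KK̂^{n/2}` generate the same subalgebra as `K` and `K̂`, scale `E`
and `F` by conjugation, and act diagonalizably with eigenvalues `q^(2i)` and `±1`. As `F` is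
nilpotent, every nonzero module contains a lowest weight vector: a joint eigenvector `v ≠ 0` of `g`
and `s` killed by `F`. If `g v = q^D v`, then `F E^(m+1) v` is a multiple of `E^m v` which is
nonzero for `m < D` and zero for `m = D`. In a simple module this forces `E^(D+1) v = 0`, so that
the module has basis `v, E v, …, E^D v`. Two simple modules with lowest weight vectors `v`, `v'` of
the same weight are isomorphic, because `(v, v')` generates a simple submodule of their product,
which then is the graph of an isomorphism.

For the socle, `α` is a lowest weight vector with `D = 2i - 2`, and `F γ = E^D α`. Consequently
`P = u γ` lies in the span of the `E`-strings of `γ` and `α`. A nonzero `w ∈ P` can be raised to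
`E^(n²-1)` applied to a combination of `γ` and `α`, and lowering by a power of `F` then gives a
nonzero multiple of `z = E^(2i-1) α`. Hence `z` lies in every nonzero submodule of `P`. It is a
lowest weight vector with `D = n² - 2i`, and it generates the socle.

That `E^(n²-1) α ≠ 0`, and that `γ` is unique, comes from explicit modules on the space spanned by
symbols `F^a E^b` with `a, b < n²`.
-/

namespace QFL

section QCommute

variable {k A M : Type*} [CommRing k] [Ring A] [Algebra k A] [AddCommGroup M] [Module k M]
  [Module A M] [IsScalarTower k A M] {c d l : k} {x y z : A}

/-- `x` and `y` commute up to the scalar `c`, i.e. `x y = c y x`. -/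
def QCommute (c : k) (x y : A) : Prop :=
  x * y = c • (y * x)

lemma QCommute.mul_left (hx : QCommute c x z) (hy : QCommute d y z) :
    QCommute (c * d) (x * y) z := by
  simp only [QCommute] at hx hy ⊢
  rw [mul_assoc, hy, mul_smul_comm, ← mul_assoc, hx, smul_mul_assoc, smul_smul, mul_assoc,
    mul_comm d]

lemma QCommute.mul_right (hy : QCommute c x y) (hz : QCommute d x z) :
    QCommute (c * d) x (y * z) := by
  simp only [QCommute] at hy hz ⊢
  rw [← mul_assoc, hy, smul_mul_assoc, mul_assoc, hz, mul_smul_comm, smul_smul, mul_assoc]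

lemma QCommute.pow_left (h : QCommute c x y) (m : ℕ) : QCommute (c ^ m) (x ^ m) y := by
  induction m with
  | zero => simp [QCommute]
  | succ m ih => simpa only [pow_succ] using ih.mul_left h

lemma QCommute.pow_right (h : QCommute c x y) (m : ℕ) : QCommute (c ^ m) x (y ^ m) := by
  induction m with
  | zero => simp [QCommute]
  | succ m ih => simpa only [pow_succ] using ih.mul_right h

lemma QCommute.smul_pow_smul (h : QCommute c x y) {v : M} (hv : x • v = l • v) (m : ℕ) :
    x • y ^ m • v = (c ^ m * l) • y ^ m • v := by
  rw [← mul_smul, h.pow_right m, smul_assoc, mul_smul, hv, smul_comm (y ^ m), smul_smul]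

lemma QCommute.symm {k A : Type*} [Field k] [Ring A] [Algebra k A] {c : k} {x y : A}
    (h : QCommute c x y) (hc : c ≠ 0) : QCommute c⁻¹ y x := by
  rw [QCommute, h, inv_smul_smul₀ hc]

end QCommute

section Orbit

variable {k A M : Type*} [CommRing k] [Ring A] [AddCommGroup M] [Module k M] [Module A M]
  {x y : A} {V W : Submodule k M} {w : M}

/-- The smallest subspace containing `V` and stable under `x`. -/
def orbitSpan (x : A) (V : Submodule k M) : Submodule k M :=
  Submodule.span k {w | ∃ b : ℕ, ∃ v ∈ V, w = x ^ b • v}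

lemma pow_smul_mem_orbitSpan (x : A) {v : M} (hv : v ∈ V) (b : ℕ) : x ^ b • v ∈ orbitSpan x V :=
  Submodule.subset_span ⟨b, v, hv, rfl⟩

lemma le_orbitSpan (x : A) (V : Submodule k M) : V ≤ orbitSpan x V := fun v hv => by
  simpa using pow_smul_mem_orbitSpan x hv 0

lemma orbitSpan_le (hVW : V ≤ W) (hW : ∀ w ∈ W, x • w ∈ W) : orbitSpan x V ≤ W := by
  rw [orbitSpan, Submodule.span_le]
  rintro _ ⟨b, v, hv, rfl⟩
  induction b with
  | zero => simpa using hVW hv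
  | succ b ih => simpa only [SetLike.mem_coe, pow_succ', mul_smul] using hW _ ih

variable [Algebra k A] [IsScalarTower k A M]

lemma smul_mem_orbitSpan (hw : w ∈ orbitSpan x V) : x • w ∈ orbitSpan x V := by
  induction hw using Submodule.span_induction with
  | mem w hw =>
    obtain ⟨b, v, hv, rfl⟩ := hw
    simpa only [pow_succ', mul_smul] using pow_smul_mem_orbitSpan x hv (b + 1)
  | zero => simp
  | add w w' _ _ hw hw' => simpa only [smul_add] using add_mem hw hw'
  | smul c w _ hw => simpa only [smul_comm x c w] using Submodule.smul_mem _ c hw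

lemma QCommute.smul_mem_orbitSpan {c : k} (h : QCommute c y x) (hV : ∀ v ∈ V, y • v ∈ V)
    (hw : w ∈ orbitSpan x V) : y • w ∈ orbitSpan x V := by
  induction hw using Submodule.span_induction with
  | mem w hw =>
    obtain ⟨b, v, hv, rfl⟩ := hw
    rw [← mul_smul, h.pow_right b, smul_assoc, mul_smul]
    exact Submodule.smul_mem _ _ (pow_smul_mem_orbitSpan x (hV v hv) b)
  | zero => simp
  | add w w' _ _ hw hw' => simpa only [smul_add] using add_mem hw hw'
  | smul c w _ hw => simpa only [smul_comm y c w] using Submodule.smul_mem _ c hw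

lemma exists_eq_add_smul_of_mem_orbitSpan (hw : w ∈ orbitSpan x V) :
    ∃ v ∈ V, ∃ w' ∈ orbitSpan x V, w = v + x • w' := by
  induction hw using Submodule.span_induction with
  | mem w hw =>
    obtain ⟨_ | b, v, hv, rfl⟩ := hw
    · exact ⟨v, hv, 0, zero_mem _, by simp⟩
    · exact ⟨0, zero_mem _, x ^ b • v, pow_smul_mem_orbitSpan x hv b, by
        rw [zero_add, pow_succ', mul_smul]⟩
  | zero => exact ⟨0, zero_mem _, 0, zero_mem _, by simp⟩
  | add _ _ _ _ h₁ h₂ =>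
    obtain ⟨v₁, hv₁, w₁, hw₁, rfl⟩ := h₁
    obtain ⟨v₂, hv₂, w₂, hw₂, rfl⟩ := h₂
    exact ⟨v₁ + v₂, add_mem hv₁ hv₂, w₁ + w₂, add_mem hw₁ hw₂, by rw [smul_add]; abel⟩
  | smul c _ _ h =>
    obtain ⟨v, hv, w, hw, rfl⟩ := h
    exact ⟨c • v, V.smul_mem c hv, c • w, Submodule.smul_mem _ c hw, by
      rw [smul_add, smul_comm x]⟩

lemma exists_pow_smul_eq_of_mem_orbitSpan {c : ℕ} (hV : ∀ v ∈ V, x ^ (c + 1) • v = 0)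
    (hw : w ∈ orbitSpan x V) (hw₀ : w ≠ 0) :
    ∃ a, ∃ v ∈ V, v ≠ 0 ∧ x ^ a • w = x ^ c • v := by
  have kills : ∀ w' ∈ orbitSpan x V, x ^ (c + 1) • w' = 0 := by
    have : orbitSpan x V ≤ LinearMap.ker (Algebra.lsmul k k M (x ^ (c + 1))) :=
      orbitSpan_le hV fun w' hw' => by
        simp only [LinearMap.mem_ker, Algebra.lsmul_coe] at hw' ⊢
        rw [← mul_smul, ← pow_succ, pow_succ', mul_smul, hw', smul_zero]
    exact this
  suffices H : ∀ d m, m + d = c + 1 → ∀ w' ∈ orbitSpan x V, x ^ m • w' ≠ 0 →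
      ∃ a, ∃ v ∈ V, v ≠ 0 ∧ x ^ a • x ^ m • w' = x ^ c • v by
    simpa using H (c + 1) 0 (by omega) w hw (by simpa using hw₀)
  intro d
  induction d with
  | zero =>
    intro m hm w' hw' hne
    obtain rfl : m = c + 1 := by omega
    exact absurd (kills w' hw') hne
  | succ d ih =>
    intro m hm w' hw' hne
    obtain ⟨v, hv, w'', hw'', rfl⟩ := exists_eq_add_smul_of_mem_orbitSpan hw'
    rcases eq_or_ne v 0 with rfl | hv₀
    · rw [zero_add, ← mul_smul, ← pow_succ] at hne ⊢
      exact ih (m + 1) (by omega) w'' hw'' hne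
    · refine ⟨d, v, hv, hv₀, ?_⟩
      rw [← mul_smul, ← pow_add, show d + m = c by omega, smul_add, ← mul_smul _ x, ← pow_succ,
        kills w'' hw'', add_zero]

lemma linearIndependent_pow_smul {k : Type*} [Field k] [Module k M] [Algebra k A]
    [IsScalarTower k A M] {v : M} {D : ℕ} (hD : x ^ D • v ≠ 0)
    (hD' : x ^ (D + 1) • v = 0) : LinearIndependent k fun b : Fin (D + 1) => x ^ (b : ℕ) • v := by
  induction D generalizing v with
  | zero => simpa [linearIndependent_unique_iff] using hD
  | succ D ih =>
    have tail : LinearIndependent k fun b : Fin (D + 1) => x ^ (b : ℕ) • x • v :=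
      ih (by rwa [← mul_smul, ← pow_succ]) (by rwa [← mul_smul, ← pow_succ])
    have head : v ∉ Submodule.span k (Set.range fun b : Fin (D + 1) => x ^ (b : ℕ) • x • v) := by
      have hker : Submodule.span k (Set.range fun b : Fin (D + 1) => x ^ (b : ℕ) • x • v) ≤
          LinearMap.ker (Algebra.lsmul k k M (x ^ (D + 1))) := by
        rw [Submodule.span_le]
        rintro _ ⟨b, rfl⟩
        simp only [SetLike.mem_coe, LinearMap.mem_ker, Algebra.lsmul_coe]
        rw [← mul_smul, ← mul_smul, mul_assoc, ← pow_succ, ← pow_add,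
          show D + 1 + (b + 1) = b + (D + 1 + 1) by omega, pow_add, mul_smul, hD', smul_zero]
      exact fun hv => hD (hker hv)
    convert linearIndependent_finCons.2 ⟨tail, head⟩ using 1
    funext b
    refine Fin.cases (by simp) (fun b => ?_) b
    simp [pow_succ, mul_smul]

end Orbit

section SimpleModule

variable {A M M' : Type*} [Ring A] [AddCommGroup M] [Module A M] [AddCommGroup M'] [Module A M']

lemma nonempty_linearEquiv_of_mem [IsSimpleModule A M] [IsSimpleModule A M']
    {L : Submodule A (M × M')} [IsSimpleModule A L] {v : M} {v' : M'} (hmem : (v, v') ∈ L)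
    (hv : v ≠ 0) (hv' : v' ≠ 0) : Nonempty (M ≃ₗ[A] M') := by
  have hfst : Function.Bijective (LinearMap.fst A M M' ∘ₗ L.subtype) :=
    LinearMap.bijective_of_ne_zero fun h => hv (LinearMap.congr_fun h ⟨_, hmem⟩)
  have hsnd : Function.Bijective (LinearMap.snd A M M' ∘ₗ L.subtype) :=
    LinearMap.bijective_of_ne_zero fun h => hv' (LinearMap.congr_fun h ⟨_, hmem⟩)
  exact ⟨(LinearEquiv.ofBijective _ hfst).symm.trans (LinearEquiv.ofBijective _ hsnd)⟩

lemma sSup_isSimpleModule_eq {P T : Submodule A M} [hT : IsSimpleModule A T] (hTP : T ≤ P)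
    (h : ∀ Q ≤ P, Q ≠ ⊥ → T ≤ Q) : sSup {Q | Q ≤ P ∧ IsSimpleModule A Q} = T := by
  refine le_antisymm (sSup_le fun Q ⟨hQP, hQ⟩ => ?_) (le_sSup ⟨hTP, hT⟩)
  rw [isSimpleModule_iff_isAtom] at hT hQ
  exact (hQ.le_iff_eq hT.1 |>.1 (h Q hQP hQ.1)).ge

end SimpleModule

section QuantumTriple

open Finset

variable {k A M : Type*} [Field k] [Ring A] [Algebra k A] [AddCommGroup M] [Module k M]
  [Module A M] [IsScalarTower k A M] {q l : k} {g e f : A}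

/-- The relations which `g = K⁻¹K̂`, `e = E` and `f = F` satisfy in `ũ_q(sl₂)`. -/
structure IsQuantumTriple (q : k) (g e f : A) : Prop where
  g_e : QCommute (q⁻¹ ^ 2) g e
  g_f : QCommute (q ^ 2) g f
  f_e : f * e = q⁻¹ • (e * f) + 1 - g

lemma IsQuantumTriple.f_smul_e_smul (H : IsQuantumTriple q g e f) (w : M) :
    f • e • w = q⁻¹ • e • f • w + w - g • w := by
  rw [← mul_smul, H.f_e, sub_smul, add_smul, one_smul, smul_assoc, mul_smul]

lemma IsQuantumTriple.exists_e_mul_f_pow_succ (H : IsQuantumTriple q g e f) (hq : q ≠ 0)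
    (a : ℕ) : ∃ c d : k,
      e * f ^ (a + 1) = q ^ (a + 1) • (f ^ (a + 1) * e) + c • f ^ a + d • (f ^ a * g) := by
  have hef : e * f = q • (f * e) - q • 1 + q • g := by
    rw [H.f_e, smul_sub, smul_add, smul_inv_smul₀ hq]
    abel
  induction a with
  | zero => exact ⟨-q, q, by simp [hef, sub_eq_add_neg]⟩
  | succ a ih =>
    obtain ⟨c, d, h⟩ := ih
    refine ⟨c - q ^ (a + 2), d * q ^ 2 + q ^ (a + 2), ?_⟩
    rw [pow_succ f (a + 1), ← mul_assoc, h, add_mul, add_mul, smul_mul_assoc, mul_assoc _ e, hef,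
      smul_mul_assoc, smul_mul_assoc, mul_assoc _ g, H.g_f, ← pow_succ]
    simp only [mul_add, mul_sub, mul_smul_comm, mul_one, ← mul_assoc, ← pow_succ]
    module

lemma IsQuantumTriple.exists_e_pow_mul_f_pow (H : IsQuantumTriple q g e f) (hq : q ≠ 0)
    (a m : ℕ) : ∃ y, e ^ m * f ^ (a + m) = f ^ a * y := by
  induction m generalizing a with
  | zero => exact ⟨1, by simp⟩
  | succ m ih =>
    obtain ⟨y, hy⟩ := ih (a + 1)
    obtain ⟨c, d, h⟩ := H.exists_e_mul_f_pow_succ hq a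
    refine ⟨(q ^ (a + 1) • (f * e) + c • 1 + d • g) * y, ?_⟩
    rw [pow_succ', mul_assoc, show a + (m + 1) = a + 1 + m by ring, hy, ← mul_assoc, h,
      ← mul_assoc, pow_succ f, mul_assoc _ f]
    simp only [mul_add, mul_smul_comm, mul_one]

/-- The scalar by which `f e^{m+1}` sends `v` to `e^m v`, when `f v = 0` and `v` has
`g`-eigenvalue `l`. -/
def lowerCoeff (q l : k) (m : ℕ) : k :=
  q⁻¹ ^ m * (∑ t ∈ range (m + 1), q ^ t) * (1 - q⁻¹ ^ m * l)

lemma lowerCoeff_succ (hq : q ≠ 0) (l : k) (m : ℕ) :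
    lowerCoeff q l (m + 1) = q⁻¹ * lowerCoeff q l m + 1 - (q⁻¹ ^ 2) ^ (m + 1) * l := by
  have top : q⁻¹ ^ (m + 1) * ∑ t ∈ range (m + 1 + 1), q ^ t =
      q⁻¹ ^ (m + 1) * ∑ t ∈ range (m + 1), q ^ t + 1 := by
    rw [sum_range_succ _ (m + 1), mul_add, ← mul_pow, inv_mul_cancel₀ hq, one_pow]
  have bottom : q⁻¹ * ∑ t ∈ range (m + 1 + 1), q ^ t = ∑ t ∈ range (m + 1), q ^ t + q⁻¹ := by
    rw [geom_sum_succ, mul_add, inv_mul_cancel_left₀ hq, mul_one]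
  simp only [lowerCoeff]
  linear_combination top - q⁻¹ ^ (2 * m + 1) * l * bottom

lemma lowerCoeff_ne_zero {N D m : ℕ} (hq : IsPrimitiveRoot q N) (hD : D < N) (hm : m < D) :
    lowerCoeff q (q ^ D) m ≠ 0 := by
  have hq₀ : q ≠ 0 := hq.ne_zero (by omega)
  refine mul_ne_zero (mul_ne_zero (pow_ne_zero _ (inv_ne_zero hq₀)) fun h => ?_) fun h => ?_
  · have hsum := geom_sum_mul q (m + 1)
    rw [h, zero_mul] at hsum
    exact hq.pow_ne_one_of_pos_of_lt (by omega) (by omega) (sub_eq_zero.1 hsum.symm)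
  · rw [inv_pow, inv_mul_eq_div, ← pow_sub₀ _ hq₀ hm.le |>.trans (div_eq_mul_inv _ _).symm] at h
    exact hq.pow_ne_one_of_pos_of_lt (by omega) (by omega) (sub_eq_zero.1 h).symm

lemma lowerCoeff_self (hq : q ≠ 0) (D : ℕ) : lowerCoeff q (q ^ D) D = 0 := by
  rw [lowerCoeff, inv_pow, inv_mul_cancel₀ (pow_ne_zero _ hq), sub_self, mul_zero]

variable {v : M}

lemma IsQuantumTriple.f_smul_pow_smul (H : IsQuantumTriple q g e f) (hq : q ≠ 0)
    (hv : g • v = l • v) (m : ℕ) :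
    f • e ^ (m + 1) • v = q⁻¹ ^ (m + 1) • e ^ (m + 1) • f • v + lowerCoeff q l m • e ^ m • v := by
  induction m with
  | zero =>
    rw [zero_add, pow_one, H.f_smul_e_smul, hv]
    simp [lowerCoeff, sub_smul, add_sub_assoc]
  | succ m ih =>
    rw [pow_succ' e (m + 1), mul_smul, H.f_smul_e_smul, ih, H.g_e.smul_pow_smul hv,
      lowerCoeff_succ hq]
    simp only [smul_add, add_smul, sub_smul, smul_comm e, ← mul_smul, ← mul_assoc,
      ← pow_succ', one_smul]
    abel

lemma IsQuantumTriple.f_smul_pow_smul_of_e_f_smul (H : IsQuantumTriple q g e f) (hq : q ≠ 0)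
    (hv : g • v = l • v) (hf : e • f • v = 0) (m : ℕ) :
    f • e ^ (m + 1) • v = lowerCoeff q l m • e ^ m • v := by
  rw [H.f_smul_pow_smul hq hv, pow_succ e, mul_smul _ e (f • v), hf, smul_zero, smul_zero, zero_add]

lemma IsQuantumTriple.exists_pow_smul_pow_smul (H : IsQuantumTriple q g e f) {N D : ℕ}
    (hq : IsPrimitiveRoot q N) (hD : D < N) (hv : g • v = q ^ D • v) (hf : e • f • v = 0) :
    ∃ c : k, c ≠ 0 ∧ f ^ D • e ^ D • v = c • v := by
  have hprod (m : ℕ) :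
      f ^ m • e ^ m • v = (∏ b ∈ range m, lowerCoeff q (q ^ D) b) • v := by
    induction m with
    | zero => simp
    | succ m ih =>
      rw [pow_succ f, mul_smul, H.f_smul_pow_smul_of_e_f_smul (hq.ne_zero (by omega)) hv hf,
        smul_comm, ih, smul_smul, prod_range_succ, mul_comm]
  exact ⟨_, prod_ne_zero_iff.2 fun b hb => lowerCoeff_ne_zero hq hD (mem_range.1 hb), hprod D⟩

lemma IsQuantumTriple.f_smul_pow_succ_smul (H : IsQuantumTriple q g e f) (hq : q ≠ 0) {D : ℕ}
    (hv : g • v = q ^ D • v) :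
    f • e ^ (D + 1) • v = q⁻¹ ^ (D + 1) • e ^ (D + 1) • f • v := by
  rw [H.f_smul_pow_smul hq hv, lowerCoeff_self hq, zero_smul, add_zero]

lemma IsQuantumTriple.f_smul_mem_orbitSpan (H : IsQuantumTriple q g e f) {V : Submodule k M}
    (hg : ∀ v ∈ V, g • v ∈ V) (hf : ∀ v ∈ V, f • v ∈ orbitSpan e V) {w : M}
    (hw : w ∈ orbitSpan e V) : f • w ∈ orbitSpan e V := by
  suffices orbitSpan e V ≤ orbitSpan e V ⊓ (orbitSpan e V).comap (Algebra.lsmul k k M f) from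
    (this hw).2
  refine orbitSpan_le (le_inf (le_orbitSpan e V) hf) fun w hw => ⟨smul_mem_orbitSpan hw.1, ?_⟩
  change f • e • w ∈ orbitSpan e V
  rw [H.f_smul_e_smul]
  exact sub_mem (add_mem (Submodule.smul_mem _ _ (smul_mem_orbitSpan hw.2)) hw.1)
    (H.g_e.smul_mem_orbitSpan hg hw.1)

end QuantumTriple

section Generators

variable {k : Type} [Field k] {n : ℕ} {q : k}

local notation "𝐊" => K k n q
local notation "𝐊ₕ" => Kh k n q
local notation "𝐄" => E k n q
local notation "𝐅" => F k n q

lemma K_pow : 𝐊 ^ n = 1 := by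
  simpa [K] using RingQuot.mkAlgHom_rel k (Rel.Kord (k := k) (n := n) (q := q))

lemma Kh_pow : 𝐊ₕ ^ n = (𝐊 ^ (n - 1)) ^ 2 := by
  simpa [K, Kh] using RingQuot.mkAlgHom_rel k (Rel.Khord (k := k) (n := n) (q := q))

lemma Kh_pow_sq : 𝐊ₕ ^ n ^ 2 = 1 := by
  rw [sq n, pow_mul, Kh_pow, ← pow_mul, pow_right_comm, pow_mul', K_pow, one_pow, one_pow]

lemma commute_K_Kh : Commute 𝐊 𝐊ₕ := by
  simpa [K, Kh, Commute, SemiconjBy] using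
    RingQuot.mkAlgHom_rel k (Rel.KKh (k := k) (n := n) (q := q))

lemma E_pow : 𝐄 ^ n ^ 2 = 0 := by
  simpa [E] using RingQuot.mkAlgHom_rel k (Rel.Enil (k := k) (n := n) (q := q))

lemma F_pow : 𝐅 ^ n ^ 2 = 0 := by
  simpa [F] using RingQuot.mkAlgHom_rel k (Rel.Fnil (k := k) (n := n) (q := q))

lemma qCommute_of_mul_mul_eq {x x' y : U k n q} {c : k} (h : x * y * x' = c • y)
    (hx : x' * x = 1) : QCommute c x y := by
  rw [QCommute, ← smul_mul_assoc, ← h, mul_assoc, hx, mul_one]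

variable [NeZero n]

lemma Kinv_mul_K : Kinv k n q * 𝐊 = 1 := by
  rw [Kinv, ← pow_succ, Nat.sub_add_cancel NeZero.one_le, K_pow]

lemma Khinv_mul_Kh : Khinv k n q * 𝐊ₕ = 1 := by
  have hn : 1 ≤ n ^ 2 := NeZero.one_le
  rw [Khinv, ← pow_succ, Nat.sub_add_cancel hn, Kh_pow_sq]

lemma qCommute_K_E : QCommute (q ^ n) 𝐊 𝐄 :=
  qCommute_of_mul_mul_eq (by
    simpa [K, E, Kinv] using RingQuot.mkAlgHom_rel k (Rel.KE (k := k) (n := n) (q := q)))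
    Kinv_mul_K

lemma qCommute_K_F : QCommute (q ^ n)⁻¹ 𝐊 𝐅 :=
  qCommute_of_mul_mul_eq (by
    simpa [K, F, Kinv] using RingQuot.mkAlgHom_rel k (Rel.KF (k := k) (n := n) (q := q)))
    Kinv_mul_K

lemma qCommute_Kh_E : QCommute (q ^ n * (q ^ 2)⁻¹) 𝐊ₕ 𝐄 :=
  qCommute_of_mul_mul_eq (by
    simpa [Kh, E, Khinv] using RingQuot.mkAlgHom_rel k (Rel.KhE (k := k) (n := n) (q := q)))
    Khinv_mul_Kh

lemma qCommute_Kh_F : QCommute ((q ^ n)⁻¹ * q ^ 2) 𝐊ₕ 𝐅 :=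
  qCommute_of_mul_mul_eq (by
    simpa [Kh, F, Khinv] using RingQuot.mkAlgHom_rel k (Rel.KhF (k := k) (n := n) (q := q)))
    Khinv_mul_Kh

variable (k n q) in
/-- The group-like element `g = K⁻¹K̂`; together with `parity` it diagonalizes `u`, and unlike
`K` and `K̂` it is the one that occurs in the relation between `E` and `F`. -/
def ratio : U k n q :=
  Kinv k n q * 𝐊ₕ

variable (k n q) in
/-- The involution `s = K K̂^{n/2}`, which commutes with `K`, `K̂` and anticommutes with
`E`, `F`. -/
def parity : U k n q :=
  𝐊 * 𝐊ₕ ^ (n / 2)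

local notation "𝐠" => ratio k n q
local notation "𝐬" => parity k n q

omit [NeZero n] in
lemma commute_K_ratio : Commute 𝐊 𝐠 :=
  ((Commute.refl 𝐊).pow_right _).mul_right commute_K_Kh

lemma K_mul_ratio : 𝐊 * 𝐠 = 𝐊ₕ := by
  rw [commute_K_ratio.eq, ratio, mul_assoc, ← commute_K_Kh.eq, ← mul_assoc, Kinv_mul_K, one_mul]

omit [NeZero n] in
lemma commute_ratio_parity : Commute 𝐠 𝐬 := by
  have h : Commute 𝐠 𝐊ₕ := (commute_K_Kh.pow_left _).mul_left (Commute.refl 𝐊ₕ)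
  exact commute_K_ratio.symm.mul_right (h.pow_right _)

lemma ratio_pow_mul_K_sq : 𝐠 ^ n * 𝐊 ^ 2 = 1 := by
  have hK : Commute (Kinv k n q) 𝐊ₕ := commute_K_Kh.pow_left _
  have hKinv : Kinv k n q ^ n = 1 := by rw [Kinv, ← pow_mul, mul_comm, pow_mul, K_pow, one_pow]
  have hcomm : Commute (Kinv k n q) 𝐊 := (Commute.refl 𝐊).pow_left _
  rw [ratio, hK.mul_pow, hKinv, one_mul, Kh_pow, ← Kinv, ← hcomm.mul_pow, Kinv_mul_K, one_pow]

lemma ratio_pow_half (h2 : 2 ∣ n) : 𝐠 ^ (n ^ 2 / 2) = 1 := by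
  have hcomm : Commute (𝐠 ^ n) (𝐊 ^ 2) := commute_K_ratio.symm.pow_pow _ _
  have h : (𝐠 ^ n * 𝐊 ^ 2) ^ (n / 2) = 1 := by rw [ratio_pow_mul_K_sq, one_pow]
  rw [hcomm.mul_pow, ← pow_mul, ← pow_mul, Nat.mul_div_cancel' h2, K_pow, mul_one] at h
  rwa [sq, Nat.mul_div_assoc _ h2]

lemma parity_sq (h2 : 2 ∣ n) : 𝐬 ^ 2 = 1 := by
  have hK : Commute 𝐊 (𝐊ₕ ^ (n / 2)) := commute_K_Kh.pow_right _
  have hcomm : Commute 𝐊 (Kinv k n q) := (Commute.refl 𝐊).pow_right _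
  rw [parity, hK.mul_pow, ← pow_mul, Nat.div_mul_cancel h2, Kh_pow, ← Kinv, ← hcomm.mul_pow,
    hcomm.eq, Kinv_mul_K, one_pow]

lemma K_eq_parity_mul_ratio_pow (h4 : 4 ∣ n) :
    𝐊 = 𝐬 * 𝐠 ^ (n / 2 * (n / 2 - 1)) := by
  obtain ⟨m, hm⟩ := h4
  have hcomm : Commute (𝐊 ^ 2) (𝐠 ^ n) := commute_K_ratio.pow_pow _ _
  have hpow : 𝐊 ^ (2 * m) * 𝐠 ^ (n * m) = 1 := by
    rw [pow_mul, pow_mul, ← hcomm.mul_pow, hcomm.eq, ratio_pow_mul_K_sq, one_pow]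
  have hexp : 2 * m + 2 * m * (2 * m - 1) = n * m := by
    obtain ⟨r, rfl⟩ : ∃ r, m = r + 1 := ⟨m - 1, by have := NeZero.ne n; omega⟩
    rw [show 2 * (r + 1) - 1 = 2 * r + 1 by omega, hm]; ring
  rw [parity, show n / 2 = 2 * m by omega, ← K_mul_ratio, commute_K_ratio.mul_pow, mul_assoc,
    mul_assoc, ← pow_add, hexp, hpow, mul_one]

lemma isQuantumTriple (hq : IsPrimitiveRoot q (n ^ 2)) : IsQuantumTriple q 𝐠 𝐄 𝐅 := by
  have hqnn : (q ^ n) ^ (n - 1) * q ^ n = 1 := by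
    rw [← pow_succ, Nat.sub_add_cancel NeZero.one_le, ← pow_mul, ← sq, hq.pow_eq_one]
  refine ⟨?_, ?_, ?_⟩
  · have h := (qCommute_K_E.pow_left (n - 1)).mul_left (qCommute_Kh_E (k := k) (n := n) (q := q))
    rwa [← mul_assoc, hqnn, one_mul, ← inv_pow] at h
  · have h := (qCommute_K_F.pow_left (n - 1)).mul_left (qCommute_Kh_F (k := k) (n := n) (q := q))
    rwa [← mul_assoc, inv_pow, ← mul_inv, hqnn, inv_one, one_mul] at h
  · have h := RingQuot.mkAlgHom_rel k (Rel.EF (k := k) (n := n) (q := q))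
    simp only [map_sub, map_mul, map_smul, map_one, map_pow] at h
    rw [add_sub_assoc, ← sub_eq_iff_eq_add']
    exact h

lemma parity_scalar (h2 : 2 ∣ n) (hq : IsPrimitiveRoot q (n ^ 2)) :
    q ^ n * (q ^ n * (q ^ 2)⁻¹) ^ (n / 2) = -1 := by
  have hq₀ : q ≠ 0 := hq.ne_zero (NeZero.ne _)
  have half : q ^ (n * (n / 2)) = -1 :=
    (hq.pow (NeZero.pos _) (by rw [mul_assoc, Nat.div_mul_cancel h2, sq])).eq_neg_one_of_two_right
  rw [mul_pow, inv_pow, ← pow_mul, ← pow_mul, half, Nat.mul_div_cancel' h2, mul_left_comm,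
    mul_inv_cancel₀ (pow_ne_zero _ hq₀), mul_one]

lemma qCommute_parity_E (h2 : 2 ∣ n) (hq : IsPrimitiveRoot q (n ^ 2)) :
    QCommute (-1 : k) 𝐬 𝐄 := by
  have h : QCommute (q ^ n * (q ^ n * (q ^ 2)⁻¹) ^ (n / 2)) 𝐬 𝐄 :=
    qCommute_K_E.mul_left (qCommute_Kh_E.pow_left _)
  rwa [parity_scalar h2 hq] at h

lemma qCommute_parity_F (h2 : 2 ∣ n) (hq : IsPrimitiveRoot q (n ^ 2)) :
    QCommute (-1 : k) 𝐬 𝐅 := by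
  have h : QCommute ((q ^ n)⁻¹ * ((q ^ n)⁻¹ * q ^ 2) ^ (n / 2)) 𝐬 𝐅 :=
    qCommute_K_F.mul_left (qCommute_Kh_F.pow_left _)
  have hinv : (q ^ n)⁻¹ * ((q ^ n)⁻¹ * q ^ 2) ^ (n / 2) =
      (q ^ n * (q ^ n * (q ^ 2)⁻¹) ^ (n / 2))⁻¹ := by
    rw [mul_inv (q ^ n), ← inv_pow (_ * _), mul_inv (q ^ n), inv_inv]
  rwa [hinv, parity_scalar h2 hq, inv_neg_one] at h

variable {M : Type*} [AddCommGroup M] [Module k M] [Module (U k n q) M]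
  [IsScalarTower k (U k n q) M]

omit [NeZero n] in
lemma smul_mem_of_generators {W : Submodule k M} (hK : ∀ w ∈ W, 𝐊 • w ∈ W)
    (hKh : ∀ w ∈ W, 𝐊ₕ • w ∈ W) (hE : ∀ w ∈ W, 𝐄 • w ∈ W) (hF : ∀ w ∈ W, 𝐅 • w ∈ W)
    (u : U k n q) {w : M} (hw : w ∈ W) : u • w ∈ W := by
  obtain ⟨x, rfl⟩ := RingQuot.mkAlgHom_surjective k (Rel k n q) u
  induction x using FreeAlgebra.induction generalizing w with
  | grade0 c => simpa only [AlgHom.commutes, algebraMap_smul] using W.smul_mem c hw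
  | grade1 i => fin_cases i; exacts [hK w hw, hKh w hw, hE w hw, hF w hw]
  | mul x y hx hy => rw [map_mul, mul_smul]; exact hx (hy hw)
  | add x y hx hy => rw [map_add, add_smul]; exact add_mem (hx hw) (hy hw)

lemma smul_mem_of_ratio_parity (h4 : 4 ∣ n) {W : Submodule k M} (hg : ∀ w ∈ W, 𝐠 • w ∈ W)
    (hs : ∀ w ∈ W, 𝐬 • w ∈ W) (hE : ∀ w ∈ W, 𝐄 • w ∈ W) (hF : ∀ w ∈ W, 𝐅 • w ∈ W)
    (u : U k n q) {w : M} (hw : w ∈ W) : u • w ∈ W := by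
  have hg_pow : ∀ t, ∀ w ∈ W, 𝐠 ^ t • w ∈ W := fun t => by
    induction t with
    | zero => simp
    | succ t ih => exact fun w hw => by rw [pow_succ, mul_smul]; exact ih _ (hg w hw)
  have hK : ∀ w ∈ W, 𝐊 • w ∈ W := fun w hw => by
    rw [K_eq_parity_mul_ratio_pow h4, mul_smul]
    exact hs _ (hg_pow _ w hw)
  refine smul_mem_of_generators hK (fun w hw => ?_) hE hF u hw
  rw [← K_mul_ratio, mul_smul]
  exact hK _ (hg w hw)

end Generators

section Idempotents

open Finset

variable {k : Type} [Field k] {n : ℕ} {q : k}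

local notation "𝐠" => ratio k n q
local notation "𝐬" => parity k n q

lemma phi_eq_geom_sum (i : ℕ) : phi k n q i =
    ((n ^ 2 : k)⁻¹ * 2) • ∑ t ∈ range (n ^ 2 / 2), (q⁻¹ ^ (2 * i) • 𝐠) ^ t := by
  simp only [phi, smul_pow, ← pow_mul, ratio]

variable [NeZero n]

lemma natCast_sq_ne_zero (hq : IsPrimitiveRoot q (n ^ 2)) : (n ^ 2 : k) ≠ 0 := by
  simpa using hq.neZero'.out

lemma two_ne_zero_of_isPrimitiveRoot (h2 : 2 ∣ n) (hq : IsPrimitiveRoot q (n ^ 2)) :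
    (2 : k) ≠ 0 := fun h => natCast_sq_ne_zero hq <| by
  obtain ⟨m, rfl⟩ := h2
  push_cast
  rw [h, zero_mul, zero_pow two_ne_zero]

lemma smul_ratio_pow_half (h2 : 2 ∣ n) (hq : IsPrimitiveRoot q (n ^ 2)) (i : ℕ) :
    (q⁻¹ ^ (2 * i) • 𝐠) ^ (n ^ 2 / 2) = 1 := by
  rw [smul_pow, ratio_pow_half h2, ← pow_mul, mul_right_comm,
    Nat.mul_div_cancel' (h2.trans (dvd_pow_self n two_ne_zero)), pow_mul, inv_pow, hq.pow_eq_one,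
    inv_one, one_pow, one_smul]

lemma ratio_mul_phi (h2 : 2 ∣ n) (hq : IsPrimitiveRoot q (n ^ 2)) (i : ℕ) :
    𝐠 * phi k n q i = q ^ (2 * i) • phi k n q i := by
  have hfix := mul_geom_sum (q⁻¹ ^ (2 * i) • 𝐠) (n ^ 2 / 2)
  rw [smul_ratio_pow_half h2 hq, sub_self, sub_mul, one_mul, sub_eq_zero, smul_mul_assoc,
    inv_pow, inv_smul_eq_iff₀ (pow_ne_zero _ (hq.ne_zero (NeZero.ne _)))] at hfix
  rw [phi_eq_geom_sum, inv_pow, mul_smul_comm, hfix, smul_comm]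

lemma ratio_mul_eIdem (h2 : 2 ∣ n) (hq : IsPrimitiveRoot q (n ^ 2)) (i j : ℕ) :
    𝐠 * eIdem k n q i j = q ^ (2 * i) • eIdem k n q i j := by
  rw [eIdem, ← mul_assoc, ratio_mul_phi h2 hq, smul_mul_assoc]

omit [NeZero n] in
lemma commute_parity_phi (i : ℕ) : Commute 𝐬 (phi k n q i) := by
  rw [phi_eq_geom_sum]
  exact (Commute.sum_right _ _ _ fun t _ =>
    (commute_ratio_parity.symm.smul_right _).pow_right t).smul_right _

lemma parity_mul_oneJ (h2 : 2 ∣ n) {j : ℕ} (hj : j ≤ 1) :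
    𝐬 * oneJ k n q j = (-1 : k) ^ j • oneJ k n q j := by
  have hs : 𝐬 * 𝐬 = 1 := by rw [← sq, parity_sq h2]
  change 𝐬 * (if j = 0 then (2 : k)⁻¹ • (1 + 𝐬) else (2 : k)⁻¹ • (1 - 𝐬)) =
    (-1 : k) ^ j • (if j = 0 then (2 : k)⁻¹ • (1 + 𝐬) else (2 : k)⁻¹ • (1 - 𝐬))
  interval_cases j
  · simp [mul_add, hs, add_comm]
  · simp only [one_ne_zero, if_false, mul_smul_comm, mul_sub, mul_one, hs, pow_one]
    module

lemma parity_mul_eIdem (h2 : 2 ∣ n) (i : ℕ) {j : ℕ} (hj : j ≤ 1) :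
    𝐬 * eIdem k n q i j = (-1 : k) ^ j • eIdem k n q i j := by
  rw [eIdem, ← mul_assoc, (commute_parity_phi i).eq, mul_assoc, parity_mul_oneJ h2 hj,
    mul_smul_comm]

lemma sum_phi (h2 : 2 ∣ n) (hq : IsPrimitiveRoot q (n ^ 2)) :
    ∑ i ∈ range (n ^ 2 / 2), phi k n q i = 1 := by
  have hN : n ^ 2 / 2 * 2 = n ^ 2 := Nat.div_mul_cancel (h2.trans (dvd_pow_self n two_ne_zero))
  have hN₀ : 0 < n ^ 2 := NeZero.pos _
  have hζ : IsPrimitiveRoot (q⁻¹ ^ 2) (n ^ 2 / 2) := hq.inv.pow hN₀ (by rw [mul_comm, hN])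
  have hcol (t : ℕ) (ht : t ∈ range (n ^ 2 / 2)) (ht₀ : t ≠ 0) :
      ∑ i ∈ range (n ^ 2 / 2), q⁻¹ ^ (2 * i * t) = 0 := by
    have hne : (q⁻¹ ^ 2) ^ t - 1 ≠ 0 :=
      sub_ne_zero.2 (hζ.pow_ne_one_of_pos_of_lt ht₀ (mem_range.1 ht))
    have hsum := mul_geom_sum ((q⁻¹ ^ 2) ^ t) (n ^ 2 / 2)
    have hroot : ((q⁻¹ ^ 2) ^ t) ^ (n ^ 2 / 2) = 1 := by
      rw [pow_right_comm, hζ.pow_eq_one, one_pow]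
    rw [hroot, sub_self] at hsum
    simpa only [← pow_mul, mul_right_comm 2 _ t] using (mul_eq_zero.1 hsum).resolve_left hne
  have hscalar : (n ^ 2 : k)⁻¹ * 2 * (n ^ 2 / 2 : ℕ) = 1 := by
    have hcast : ((n ^ 2 / 2 : ℕ) : k) * 2 = n ^ 2 := mod_cast congrArg (Nat.cast (R := k)) hN
    rw [mul_assoc, mul_comm 2, hcast, inv_mul_cancel₀ (natCast_sq_ne_zero hq)]
  simp only [phi]
  rw [← smul_sum, sum_comm]
  simp only [← sum_smul]
  rw [sum_eq_single_of_mem 0 (mem_range.2 (by omega))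
    fun t ht ht₀ => by rw [hcol t ht ht₀, zero_smul]]
  simpa [smul_smul] using congrArg (· • (1 : U k n q)) hscalar

lemma sum_eIdem (h2 : 2 ∣ n) (hq : IsPrimitiveRoot q (n ^ 2)) :
    ∑ i ∈ range (n ^ 2 / 2), ∑ j ∈ range 2, eIdem k n q i j = 1 := by
  have hone : ∑ j ∈ range 2, oneJ k n q j = 1 := by
    simp only [oneJ, sum_range_succ, range_zero, sum_empty, zero_add, if_pos, one_ne_zero,
      if_false, ← smul_add, add_add_sub_cancel, ← two_smul k (1 : U k n q)]
    exact inv_smul_smul₀ (two_ne_zero_of_isPrimitiveRoot h2 hq) _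
  simp only [eIdem, ← mul_sum, hone, mul_one, sum_phi h2 hq]

end Idempotents

section WeightVectors

variable {k : Type} [Field k] {n : ℕ} {q : k} {M : Type*} [AddCommGroup M] [Module k M]
  [Module (U k n q) M]

variable (n q) in
/-- `v` is a simultaneous eigenvector of `ratio` and `parity`, with eigenvalues `l` and `σ`. As
these two elements generate the same subalgebra as `K` and `K̂`, this is a weight vector in the
usual sense. -/
def IsWeightVector (l σ : k) (v : M) : Prop :=
  ratio k n q • v = l • v ∧ parity k n q • v = σ • v

variable [NeZero n] [IsScalarTower k (U k n q) M] {l σ : k} {v : M}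

lemma inv_sq_pow_mul_pow (hq : IsPrimitiveRoot q (n ^ 2)) {D D' m : ℕ}
    (h : D + n ^ 2 = 2 * m + D') : (q⁻¹ ^ 2) ^ m * q ^ D = q ^ D' := by
  rw [← pow_mul, inv_pow, inv_mul_eq_iff_eq_mul₀ (pow_ne_zero _ (hq.ne_zero (NeZero.ne _))),
    ← pow_add, ← h, pow_add, hq.pow_eq_one, mul_one]

lemma isWeightVector_eIdem_smul (h2 : 2 ∣ n) (hq : IsPrimitiveRoot q (n ^ 2)) (i : ℕ) {j : ℕ}
    (hj : j ≤ 1) (v : M) : IsWeightVector n q (q ^ (2 * i)) ((-1) ^ j) (eIdem k n q i j • v) := by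
  constructor
  · rw [← mul_smul, ratio_mul_eIdem h2 hq, smul_assoc]
  · rw [← mul_smul, parity_mul_eIdem h2 i hj, smul_assoc]

lemma IsWeightVector.pow_E_smul (h2 : 2 ∣ n) (hq : IsPrimitiveRoot q (n ^ 2))
    (hv : IsWeightVector n q l σ v) (m : ℕ) :
    IsWeightVector n q ((q⁻¹ ^ 2) ^ m * l) ((-1) ^ m * σ) (E k n q ^ m • v) :=
  ⟨(isQuantumTriple hq).g_e.smul_pow_smul hv.1 m, (qCommute_parity_E h2 hq).smul_pow_smul hv.2 m⟩

lemma IsWeightVector.pow_F_smul (h2 : 2 ∣ n) (hq : IsPrimitiveRoot q (n ^ 2))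
    (hv : IsWeightVector n q l σ v) (m : ℕ) :
    IsWeightVector n q ((q ^ 2) ^ m * l) ((-1) ^ m * σ) (F k n q ^ m • v) :=
  ⟨(isQuantumTriple hq).g_f.smul_pow_smul hv.1 m, (qCommute_parity_F h2 hq).smul_pow_smul hv.2 m⟩

lemma IsWeightVector.eIdem_smul (h2 : 2 ∣ n) (hq : IsPrimitiveRoot q (n ^ 2)) {i j : ℕ}
    (hj : j ≤ 1) (hv : IsWeightVector n q (q ^ (2 * i)) ((-1) ^ j) v) :
    eIdem k n q i j • v = v := by
  have hN : ((n ^ 2 / 2 : ℕ) : k) * 2 = n ^ 2 := by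
    exact_mod_cast congrArg (Nat.cast (R := k))
      (Nat.div_mul_cancel (h2.trans (dvd_pow_self n two_ne_zero)))
  have hphi : phi k n q i • v = v := by
    have hfix (t : ℕ) : (q⁻¹ ^ (2 * i) • ratio k n q) ^ t • v = v := by
      induction t with
      | zero => rw [pow_zero, one_smul]
      | succ t ih => rw [pow_succ, mul_smul, smul_assoc, hv.1, inv_pow,
          inv_smul_smul₀ (pow_ne_zero _ (hq.ne_zero (NeZero.ne _))), ← inv_pow, ih]
    rw [phi_eq_geom_sum, smul_assoc, Finset.sum_smul, Finset.sum_congr rfl fun t _ => hfix t,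
      Finset.sum_const, Finset.card_range, ← Nat.cast_smul_eq_nsmul k, smul_smul, mul_assoc,
      mul_comm 2, hN, inv_mul_cancel₀ (natCast_sq_ne_zero hq), one_smul]
  have honeJ : oneJ k n q j • v = v := by
    have htwo : (2 : k)⁻¹ • (v + v) = v := by
      rw [← two_smul k v, inv_smul_smul₀ (two_ne_zero_of_isPrimitiveRoot h2 hq)]
    have hs := hv.2
    rw [parity] at hs
    interval_cases j
    · simpa [oneJ, add_smul, hs] using htwo
    · simpa [oneJ, sub_smul, hs] using htwo
  rw [eIdem, mul_smul, honeJ, hphi]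

end WeightVectors

section LowestWeight

variable {k : Type} [Field k] {n : ℕ} {q : k} {M : Type*} [AddCommGroup M]
  [Module (U k n q) M]

local notation "𝐠" => ratio k n q
local notation "𝐬" => parity k n q
local notation "𝐄" => E k n q
local notation "𝐅" => F k n q

lemma exists_ne_zero_F_smul_eq_zero [Nontrivial M] : ∃ w : M, w ≠ 0 ∧ 𝐅 • w = 0 := by
  obtain ⟨w, hw⟩ := exists_ne (0 : M)
  classical
  have hex : ∃ m, 𝐅 ^ m • w = 0 := ⟨n ^ 2, by rw [F_pow, zero_smul]⟩
  obtain ⟨m, hm⟩ : ∃ m, Nat.find hex = m + 1 :=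
    Nat.exists_eq_succ_of_ne_zero fun h => hw (by simpa [h] using Nat.find_spec hex)
  exact ⟨𝐅 ^ m • w, Nat.find_min hex (by omega), by
    rw [← mul_smul, ← pow_succ', ← hm]; exact Nat.find_spec hex⟩

variable [Module k M] [IsScalarTower k (U k n q) M]

lemma eIdem_smul_mem {W : Submodule k M} (hg : ∀ w ∈ W, 𝐠 • w ∈ W) (hs : ∀ w ∈ W, 𝐬 • w ∈ W)
    (i j : ℕ) {w : M} (hw : w ∈ W) : eIdem k n q i j • w ∈ W := by
  have hphi : ∀ w ∈ W, phi k n q i • w ∈ W := fun w hw => by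
    have hpow (t : ℕ) : 𝐠 ^ t • w ∈ W := by
      induction t with
      | zero => simpa using hw
      | succ t ih => rw [pow_succ', mul_smul]; exact hg _ ih
    simp only [phi, smul_assoc, Finset.sum_smul]
    exact W.smul_mem _ (sum_mem fun t _ => W.smul_mem _ (hpow t))
  rw [eIdem, mul_smul]
  refine hphi _ ?_
  rw [oneJ, ← parity]
  split_ifs
  · rw [smul_assoc, add_smul, one_smul]; exact W.smul_mem _ (add_mem hw (hs w hw))
  · rw [smul_assoc, sub_smul, one_smul]; exact W.smul_mem _ (sub_mem hw (hs w hw))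

variable [NeZero n]

lemma span_restrictScalars_eq_orbitSpan (h4 : 4 ∣ n) (hq : IsPrimitiveRoot q (n ^ 2))
    {V : Submodule k M} (hg : ∀ v ∈ V, 𝐠 • v ∈ V) (hs : ∀ v ∈ V, 𝐬 • v ∈ V)
    (hF : ∀ v ∈ V, 𝐅 • v ∈ orbitSpan 𝐄 V) :
    (Submodule.span (U k n q) (V : Set M)).restrictScalars k = orbitSpan 𝐄 V := by
  have H := isQuantumTriple hq
  refine le_antisymm (fun w hw => ?_)
    (orbitSpan_le Submodule.subset_span fun w hw =>
      (Submodule.span (U k n q) (V : Set M)).smul_mem 𝐄 hw)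
  rw [Submodule.restrictScalars_mem] at hw
  induction hw using Submodule.span_induction with
  | mem v hv => exact le_orbitSpan _ _ hv
  | zero => exact zero_mem _
  | add w w' _ _ hw hw' => exact add_mem hw hw'
  | smul u w _ hw =>
    exact smul_mem_of_ratio_parity h4 (fun _ => H.g_e.smul_mem_orbitSpan hg)
      (fun _ => (qCommute_parity_E ((by norm_num : 2 ∣ 4).trans h4) hq).smul_mem_orbitSpan hs)
      (fun _ => smul_mem_orbitSpan) (fun _ => H.f_smul_mem_orbitSpan hg hF) u hw

lemma IsWeightVector.span_restrictScalars (h4 : 4 ∣ n) (hq : IsPrimitiveRoot q (n ^ 2)) {l σ : k}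
    {v : M} (hv : IsWeightVector n q l σ v) (hF : 𝐅 • v = 0) :
    (Submodule.span (U k n q) {v}).restrictScalars k = orbitSpan 𝐄 (Submodule.span k {v}) := by
  rw [← Submodule.span_span_of_tower k (U k n q) {v}]
  refine span_restrictScalars_eq_orbitSpan h4 hq ?_ ?_ ?_ <;>
    simp only [Submodule.mem_span_singleton, forall_exists_index, forall_apply_eq_imp_iff]
  · exact fun c => ⟨c * l, by rw [smul_comm, hv.1, smul_smul]⟩
  · exact fun c => ⟨c * σ, by rw [smul_comm, hv.2, smul_smul]⟩
  · intro c
    rw [smul_comm, hF, smul_zero]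
    exact zero_mem _

variable (n q) in
/-- `v` is a nonzero weight vector killed by `F`, with `ratio`-eigenvalue `q ^ D` and
`parity`-eigenvalue `σ`. -/
structure IsLowestWeightVector (D : ℕ) (σ : k) (v : M) : Prop where
  ne_zero : v ≠ 0
  isWeightVector : IsWeightVector n q (q ^ D) σ v
  F_smul : 𝐅 • v = 0

namespace IsLowestWeightVector

variable {D : ℕ} {σ : k} {v : M}

lemma exists_pow_F_smul_pow_E_smul (hq : IsPrimitiveRoot q (n ^ 2)) (hD : D < n ^ 2)
    (hv : IsLowestWeightVector n q D σ v) :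
    ∃ c : k, c ≠ 0 ∧ 𝐅 ^ D • 𝐄 ^ D • v = c • v :=
  (isQuantumTriple hq).exists_pow_smul_pow_smul hq hD hv.isWeightVector.1
    (by rw [hv.F_smul, smul_zero])

lemma pow_E_smul_ne_zero (hq : IsPrimitiveRoot q (n ^ 2)) (hD : D < n ^ 2)
    (hv : IsLowestWeightVector n q D σ v) : 𝐄 ^ D • v ≠ 0 := fun h => by
  obtain ⟨c, hc, hFE⟩ := hv.exists_pow_F_smul_pow_E_smul hq hD
  rw [h, smul_zero] at hFE
  exact smul_ne_zero hc hv.ne_zero hFE.symm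

lemma F_smul_pow_succ_E_smul (hq : IsPrimitiveRoot q (n ^ 2))
    (hv : IsLowestWeightVector n q D σ v) : 𝐅 • 𝐄 ^ (D + 1) • v = 0 := by
  rw [(isQuantumTriple hq).f_smul_pow_succ_smul (hq.ne_zero (NeZero.ne _)) hv.isWeightVector.1,
    hv.F_smul, smul_zero, smul_zero]

lemma pow_succ_E_smul (h2 : 2 ∣ n) (hq : IsPrimitiveRoot q (n ^ 2))
    (hv : IsLowestWeightVector n q D σ v) {D' : ℕ} (hD : D + D' + 2 = n ^ 2)
    (hne : 𝐄 ^ (D + 1) • v ≠ 0) :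
    IsLowestWeightVector n q D' ((-1) ^ (D + 1) * σ) (𝐄 ^ (D + 1) • v) where
  ne_zero := hne
  isWeightVector := by
    rw [← inv_sq_pow_mul_pow hq (show D + n ^ 2 = 2 * (D + 1) + D' by omega)]
    exact hv.isWeightVector.pow_E_smul h2 hq (D + 1)
  F_smul := hv.F_smul_pow_succ_E_smul hq

lemma mem_span_of_ne_zero (h4 : 4 ∣ n) (hq : IsPrimitiveRoot q (n ^ 2)) (hD : D < n ^ 2)
    (hv : IsLowestWeightVector n q D σ v) (hE : 𝐄 ^ (D + 1) • v = 0) {w : M}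
    (hw : w ∈ Submodule.span (U k n q) {v}) (hw₀ : w ≠ 0) :
    v ∈ Submodule.span (U k n q) {w} := by
  have hw' : w ∈ orbitSpan 𝐄 (Submodule.span k {v}) := by
    rwa [← hv.isWeightVector.span_restrictScalars h4 hq hv.F_smul]
  obtain ⟨a, _, hv', hne, hpow⟩ := exists_pow_smul_eq_of_mem_orbitSpan (c := D) (fun v' hv' => by
    obtain ⟨c, rfl⟩ := Submodule.mem_span_singleton.1 hv'
    rw [smul_comm, hE, smul_zero]) hw' hw₀
  obtain ⟨c, rfl⟩ := Submodule.mem_span_singleton.1 hv'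
  obtain ⟨d, hd, hFE⟩ := hv.exists_pow_F_smul_pow_E_smul hq hD
  have hcd : d * c ≠ 0 := mul_ne_zero hd fun hc => hne (by rw [hc, zero_smul])
  have hFEw : 𝐅 ^ D • 𝐄 ^ a • w = (d * c) • v := by
    rw [hpow, smul_comm _ c, smul_comm _ c, hFE, smul_smul, mul_comm]
  rw [← inv_smul_smul₀ hcd v, ← hFEw]
  exact Submodule.smul_of_tower_mem _ _ <| Submodule.smul_mem _ _ <| Submodule.smul_mem _ _ <|
    Submodule.mem_span_singleton_self w

theorem isSimpleModule_span (h4 : 4 ∣ n) (hq : IsPrimitiveRoot q (n ^ 2)) (hD : D < n ^ 2)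
    (hv : IsLowestWeightVector n q D σ v) (hE : 𝐄 ^ (D + 1) • v = 0) :
    IsSimpleModule (U k n q) (Submodule.span (U k n q) {v}) := by
  rw [isSimpleModule_iff_isAtom]
  refine ⟨by simpa using hv.ne_zero, fun L hL => (Submodule.eq_bot_iff L).2 fun w hw => ?_⟩
  by_contra hw₀
  refine hL.not_ge ((Submodule.span_singleton_le_iff_mem _ _).2 ?_)
  exact (Submodule.span_singleton_le_iff_mem _ _).2 hw
    (hv.mem_span_of_ne_zero h4 hq hD hE (hL.le hw) hw₀)

theorem finrank_span (h4 : 4 ∣ n) (hq : IsPrimitiveRoot q (n ^ 2)) (hD : D < n ^ 2)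
    (hv : IsLowestWeightVector n q D σ v) (hE : 𝐄 ^ (D + 1) • v = 0) :
    Module.finrank k (Submodule.span (U k n q) {v}) = D + 1 := by
  have hbasis : (Submodule.span (U k n q) {v}).restrictScalars k =
      Submodule.span k (Set.range fun b : Fin (D + 1) => 𝐄 ^ (b : ℕ) • v) := by
    rw [hv.isWeightVector.span_restrictScalars h4 hq hv.F_smul]
    refine le_antisymm (orbitSpan_le ?_ fun w hw => ?_) (Submodule.span_le.2 ?_)
    · rw [Submodule.span_singleton_le_iff_mem]
      exact Submodule.subset_span ⟨0, by simp⟩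
    · induction hw using Submodule.span_induction with
      | mem w hw =>
        obtain ⟨b, rfl⟩ := hw
        change 𝐄 • 𝐄 ^ (b : ℕ) • v ∈ _
        rw [← mul_smul, ← pow_succ']
        rcases b.is_le.lt_or_eq with hb | hb
        · exact Submodule.subset_span ⟨⟨b + 1, by omega⟩, rfl⟩
        · rw [hb, hE]; exact zero_mem _
      | zero => rw [smul_zero]; exact zero_mem _
      | add w w' _ _ hw hw' => rw [smul_add]; exact add_mem hw hw'
      | smul c w _ hw => rw [smul_comm]; exact Submodule.smul_mem _ c hw
    · rintro _ ⟨b, rfl⟩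
      exact pow_smul_mem_orbitSpan _ (Submodule.mem_span_singleton_self v) b
  calc Module.finrank k (Submodule.span (U k n q) {v})
      = Module.finrank k ((Submodule.span (U k n q) {v}).restrictScalars k) := rfl
    _ = D + 1 := by
      rw [hbasis, finrank_span_eq_card
        (linearIndependent_pow_smul (hv.pow_E_smul_ne_zero hq hD) hE), Fintype.card_fin]

lemma pow_succ_E_smul_eq_zero [IsSimpleModule (U k n q) M] (h4 : 4 ∣ n)
    (hq : IsPrimitiveRoot q (n ^ 2)) (hv : IsLowestWeightVector n q D σ v) :
    𝐄 ^ (D + 1) • v = 0 := by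
  by_contra hne
  have htop : orbitSpan 𝐄 (Submodule.span k {𝐄 ^ (D + 1) • v}) = ⊤ := by
    rw [← (hv.isWeightVector.pow_E_smul ((by norm_num : 2 ∣ 4).trans h4) hq
        (D + 1)).span_restrictScalars h4 hq (hv.F_smul_pow_succ_E_smul hq),
      IsSimpleModule.span_singleton_eq_top _ hne, Submodule.restrictScalars_top]
  have hrange : orbitSpan 𝐄 (Submodule.span k {𝐄 ^ (D + 1) • v}) ≤
      LinearMap.range (Algebra.lsmul k k M 𝐄) := by
    refine orbitSpan_le ?_ fun w _ => ⟨w, rfl⟩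
    rw [Submodule.span_singleton_le_iff_mem, pow_succ', mul_smul]
    exact ⟨_, rfl⟩
  have hdiv (m : ℕ) (w : M) : ∃ w', w = 𝐄 ^ m • w' := by
    induction m with
    | zero => exact ⟨w, by simp⟩
    | succ m ih =>
      obtain ⟨w', rfl⟩ := ih
      obtain ⟨w'', rfl⟩ := hrange (htop ▸ Submodule.mem_top : w' ∈ _)
      exact ⟨w'', by rw [pow_succ, mul_smul]; rfl⟩
  obtain ⟨w, hw⟩ := hdiv (n ^ 2) v
  exact hv.ne_zero (by rw [hw, E_pow, zero_smul])

theorem nonempty_linearEquiv {M' : Type*} [AddCommGroup M'] [Module k M'] [Module (U k n q) M']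
    [IsScalarTower k (U k n q) M'] [IsSimpleModule (U k n q) M] [IsSimpleModule (U k n q) M']
    (h4 : 4 ∣ n) (hq : IsPrimitiveRoot q (n ^ 2)) (hD : D < n ^ 2)
    (hv : IsLowestWeightVector n q D σ v) {v' : M'} (hv' : IsLowestWeightVector n q D σ v') :
    Nonempty (M ≃ₗ[U k n q] M') := by
  have hpair : IsLowestWeightVector n q D σ (v, v') :=
    { ne_zero := fun h => hv.ne_zero (congrArg Prod.fst h)
      isWeightVector := ⟨Prod.ext hv.isWeightVector.1 hv'.isWeightVector.1,
        Prod.ext hv.isWeightVector.2 hv'.isWeightVector.2⟩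
      F_smul := Prod.ext hv.F_smul hv'.F_smul }
  let L := Submodule.span (U k n q) {(v, v')}
  have : IsSimpleModule (U k n q) L := hpair.isSimpleModule_span h4 hq hD <|
    Prod.ext (hv.pow_succ_E_smul_eq_zero h4 hq) (hv'.pow_succ_E_smul_eq_zero h4 hq)
  exact nonempty_linearEquiv_of_mem (Submodule.mem_span_singleton_self _ : (v, v') ∈ L)
    hv.ne_zero hv'.ne_zero

end IsLowestWeightVector

theorem exists_isLowestWeightVector [Nontrivial M] (h2 : 2 ∣ n)
    (hq : IsPrimitiveRoot q (n ^ 2)) :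
    ∃ i j : ℕ, 1 ≤ i ∧ i ≤ n ^ 2 / 2 ∧ j ≤ 1 ∧
      ∃ v : M, IsLowestWeightVector n q (n ^ 2 - 2 * i) ((-1) ^ j) v := by
  obtain ⟨w, hw₀, hw⟩ := exists_ne_zero_F_smul_eq_zero (k := k) (n := n) (q := q) (M := M)
  have hker : ∀ x : U k n q, ∀ c : k, c ≠ 0 → QCommute c x 𝐅 →
      ∀ w ∈ LinearMap.ker (Algebra.lsmul k k M 𝐅), x • w ∈
        LinearMap.ker (Algebra.lsmul k k M 𝐅) := fun x c hc hx w hw => by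
    have hw : 𝐅 • w = 0 := hw
    have h : c • 𝐅 • x • w = 0 := by
      rw [← mul_smul 𝐅, ← smul_assoc, ← hx, mul_smul, hw, smul_zero]
    exact (smul_eq_zero.1 h).resolve_left hc
  obtain ⟨i, hi, hi'⟩ : ∃ i ∈ Finset.range (n ^ 2 / 2),
      ∑ j ∈ Finset.range 2, eIdem k n q i j • w ≠ 0 :=
    Finset.exists_ne_zero_of_sum_ne_zero <| by
      simpa only [← Finset.sum_smul, sum_eIdem h2 hq, one_smul] using hw₀
  obtain ⟨j, hj, hne⟩ := Finset.exists_ne_zero_of_sum_ne_zero hi'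
  rw [Finset.mem_range] at hi hj
  refine ⟨n ^ 2 / 2 - i, j, by omega, by omega, by omega, eIdem k n q i j • w, hne, ?_, ?_⟩
  · have hN : 2 ∣ n ^ 2 := h2.trans (dvd_pow_self n two_ne_zero)
    rw [show n ^ 2 - 2 * (n ^ 2 / 2 - i) = 2 * i by omega]
    exact isWeightVector_eIdem_smul h2 hq i (by omega) w
  · exact eIdem_smul_mem
      (hker _ _ (pow_ne_zero _ (hq.ne_zero (NeZero.ne _))) (isQuantumTriple hq).g_f)
      (hker _ _ (neg_ne_zero.2 one_ne_zero) (qCommute_parity_F h2 hq)) i j hw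

end LowestWeight

section MonomialSpace

open Finset

variable {k : Type} [Field k] {N : ℕ} {q : k}

variable (k N) in
/-- The vector standing for the monomial `F^a E^b` in the space `k^(N × N)`. It is zero unless
`a, b < N`, in accordance with `F^N = E^N = 0`. -/
def monomialVec (a b : ℕ) : Fin N × Fin N → k :=
  fun p => if (p.1 : ℕ) = a ∧ (p.2 : ℕ) = b then 1 else 0

local notation "𝐯" => monomialVec k N

lemma monomialVec_eq_single (p : Fin N × Fin N) : 𝐯 p.1 p.2 = Pi.single p 1 := by
  funext r
  simp only [monomialVec, Pi.single_apply, Prod.ext_iff, Fin.ext_iff]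

lemma monomialVec_eq_zero {a b : ℕ} (h : ¬(a < N ∧ b < N)) : 𝐯 a b = 0 := by
  funext p
  exact if_neg fun (hp : (p.1 : ℕ) = a ∧ (p.2 : ℕ) = b) => h ⟨hp.1 ▸ p.1.2, hp.2 ▸ p.2.2⟩

lemma linearIndependent_monomialVec :
    LinearIndependent k fun p : Fin N × Fin N => 𝐯 p.1 p.2 := by
  convert (Pi.basisFun k (Fin N × Fin N)).linearIndependent using 1
  funext p
  rw [monomialVec_eq_single, Pi.basisFun_apply]

lemma ext_monomialVec {W : Type*} [AddCommGroup W] [Module k W]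
    {f g : (Fin N × Fin N → k) →ₗ[k] W}
    (h : ∀ a b, a < N → b < N → f (𝐯 a b) = g (𝐯 a b)) : f = g :=
  (Pi.basisFun k _).ext fun p => by
    simpa only [Pi.basisFun_apply, ← monomialVec_eq_single] using h p.1 p.2 p.1.2 p.2.2

/-- The operator with `F^a E^b ↦ T a b`, for `a, b < N`. -/
def monomialOp (T : ℕ → ℕ → Fin N × Fin N → k) : Module.End k (Fin N × Fin N → k) :=
  (Pi.basisFun k (Fin N × Fin N)).constr k fun p => T p.1 p.2

lemma monomialOp_apply {T : ℕ → ℕ → Fin N × Fin N → k}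
    (hT : ∀ a b, ¬(a < N ∧ b < N) → T a b = 0) (a b : ℕ) : monomialOp T (𝐯 a b) = T a b := by
  by_cases h : a < N ∧ b < N
  · have hsingle : 𝐯 a b = Pi.basisFun k (Fin N × Fin N) (⟨a, h.1⟩, ⟨b, h.2⟩) := by
      rw [Pi.basisFun_apply, ← monomialVec_eq_single]
    rw [hsingle, monomialOp, Module.Basis.constr_basis]
  · rw [hT a b h, monomialVec_eq_zero h, map_zero]

variable (N) in
/-- The action of a group-like element which commutes up to `x` with `E` and up to `x⁻¹` with `F`,
and which has eigenvalue `κ` on the vector standing for `1`. -/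
def weightOp (x κ : k) : Module.End k (Fin N × Fin N → k) :=
  monomialOp fun a b => (x ^ b * x⁻¹ ^ a * κ) • 𝐯 a b

variable (k N) in
/-- The action of `F`. -/
def lowerOp : Module.End k (Fin N × Fin N → k) :=
  monomialOp fun a b => 𝐯 (a + 1) b

/-- The coefficient of `F^(a-1) E^b` in `E F^a E^b`, when `K⁻¹K̂` has eigenvalue `l` on the vector
standing for `1`. -/
def raiseCoeff (q l : k) (a b : ℕ) : k :=
  (∑ t ∈ range a, q ^ t) * (q ^ a * q⁻¹ ^ (2 * b) * l - q)

variable (N) in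
/-- The action of `E`, when `K⁻¹K̂` has eigenvalue `l` on the vector standing for `1`. -/
def raiseOp (q l : k) : Module.End k (Fin N × Fin N → k) :=
  monomialOp fun a b => q ^ a • 𝐯 a (b + 1) + raiseCoeff q l a b • 𝐯 (a - 1) b

lemma weightOp_apply (x κ : k) (a b : ℕ) :
    weightOp N x κ (𝐯 a b) = (x ^ b * x⁻¹ ^ a * κ) • 𝐯 a b :=
  monomialOp_apply (fun a b h => by rw [monomialVec_eq_zero h, smul_zero]) a b

lemma weightOp_one_one : weightOp N (1 : k) 1 = 1 :=
  ext_monomialVec fun a b _ _ => by simp [weightOp_apply]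

lemma weightOp_mul (x y κ κ' : k) :
    weightOp N x κ * weightOp N y κ' = weightOp N (x * y) (κ * κ') :=
  ext_monomialVec fun a b _ _ => by
    rw [Module.End.mul_apply, weightOp_apply, map_smul, weightOp_apply, weightOp_apply, smul_smul]
    congr 1
    rw [mul_inv]
    ring

lemma weightOp_pow (x κ : k) (m : ℕ) : weightOp N x κ ^ m = weightOp N (x ^ m) (κ ^ m) := by
  induction m with
  | zero => simp [weightOp_one_one]
  | succ m ih => rw [pow_succ, ih, weightOp_mul, ← pow_succ, ← pow_succ]

lemma lowerOp_apply (a b : ℕ) : lowerOp k N (𝐯 a b) = 𝐯 (a + 1) b :=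
  monomialOp_apply (fun _ _ h => monomialVec_eq_zero (by omega)) a b

lemma lowerOp_pow_apply (a b m : ℕ) : (lowerOp k N ^ m) (𝐯 a b) = 𝐯 (a + m) b := by
  induction m with
  | zero => rfl
  | succ m ih => rw [pow_succ', Module.End.mul_apply, ih, lowerOp_apply, add_assoc]

lemma lowerOp_pow : lowerOp k N ^ N = 0 :=
  ext_monomialVec fun a b _ _ => by
    rw [lowerOp_pow_apply, monomialVec_eq_zero (by omega), LinearMap.zero_apply]

lemma raiseOp_apply (hq : IsPrimitiveRoot q N) (hN : 1 < N) (l : k) (a b : ℕ) :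
    raiseOp N q l (𝐯 a b) = q ^ a • 𝐯 a (b + 1) + raiseCoeff q l a b • 𝐯 (a - 1) b := by
  refine monomialOp_apply (fun a b h => ?_) a b
  rw [monomialVec_eq_zero (by omega), smul_zero, zero_add]
  rcases eq_or_ne a N with rfl | ha
  · rw [raiseCoeff, hq.geom_sum_eq_zero hN, zero_mul, zero_smul]
  · rw [monomialVec_eq_zero (by omega), smul_zero]

lemma raiseOp_pow_apply (hq : IsPrimitiveRoot q N) (hN : 1 < N) (l : k) (b m : ℕ) :
    (raiseOp N q l ^ m) (𝐯 0 b) = 𝐯 0 (b + m) := by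
  induction m with
  | zero => rfl
  | succ m ih =>
    rw [pow_succ', Module.End.mul_apply, ih, raiseOp_apply hq hN, pow_zero, one_smul, raiseCoeff,
      range_zero, sum_empty, zero_mul, zero_smul, add_zero, add_assoc]

lemma qCommute_weightOp_lowerOp (x κ : k) :
    QCommute x⁻¹ (weightOp N x κ) (lowerOp k N) :=
  ext_monomialVec fun a b _ _ => by
    rw [LinearMap.smul_apply, Module.End.mul_apply, Module.End.mul_apply, lowerOp_apply,
      weightOp_apply, weightOp_apply, map_smul, lowerOp_apply, smul_smul, pow_succ]
    congr 1
    ring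

lemma qCommute_weightOp_raiseOp (hq : IsPrimitiveRoot q N) (hN : 1 < N) {x : k} (hx : x ≠ 0)
    (κ l : k) : QCommute x (weightOp N x κ) (raiseOp N q l) :=
  ext_monomialVec fun a b _ _ => by
    rw [LinearMap.smul_apply, Module.End.mul_apply, Module.End.mul_apply, raiseOp_apply hq hN,
      weightOp_apply, map_add, map_smul, map_smul, map_smul, weightOp_apply, weightOp_apply,
      raiseOp_apply hq hN]
    simp only [smul_add, smul_smul]
    congr 2
    · ring
    · rcases a with _ | a
      · simp [raiseCoeff]
      · rw [Nat.add_sub_cancel, pow_succ x⁻¹]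
        field_simp

lemma raiseCoeff_succ (hq : q ≠ 0) (l : k) (a b : ℕ) :
    raiseCoeff q l a b - q⁻¹ * raiseCoeff q l (a + 1) b = 1 - (q ^ 2) ^ a * (q⁻¹ ^ 2) ^ b * l := by
  have hsum := geom_sum_succ (x := q) (n := a)
  have hsum' := sum_range_succ (fun t => q ^ t) a
  have hinv := inv_mul_cancel₀ hq
  simp only [raiseCoeff]
  linear_combination hsum - q ^ a * q⁻¹ ^ (2 * b) * l * hsum' -
    (∑ t ∈ range (a + 1), q ^ t) * (q ^ a * q⁻¹ ^ (2 * b) * l - 1) * hinv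

lemma isQuantumTriple_monomialOps (hq : IsPrimitiveRoot q N) (hN : 1 < N) (l : k) :
    IsQuantumTriple q (weightOp N (q⁻¹ ^ 2) l) (raiseOp N q l) (lowerOp k N) := by
  have hq₀ : q ≠ 0 := hq.ne_zero (by omega)
  have hx : q⁻¹ ^ 2 ≠ 0 := pow_ne_zero _ (inv_ne_zero hq₀)
  refine ⟨qCommute_weightOp_raiseOp hq hN hx l l, ?_, ext_monomialVec fun a b _ _ => ?_⟩
  · have h := qCommute_weightOp_lowerOp (N := N) (q⁻¹ ^ 2) l
    rwa [show (q⁻¹ ^ 2)⁻¹ = q ^ 2 by rw [inv_pow, inv_inv]] at h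
  · rw [LinearMap.sub_apply, LinearMap.add_apply, LinearMap.smul_apply, Module.End.mul_apply,
      Module.End.mul_apply, Module.End.one_apply, lowerOp_apply, raiseOp_apply hq hN,
      raiseOp_apply hq hN, map_add, map_smul, map_smul, lowerOp_apply, lowerOp_apply,
      weightOp_apply, Nat.add_sub_cancel]
    have hlast : raiseCoeff q l a b • 𝐯 (a - 1 + 1) b = raiseCoeff q l a b • 𝐯 a b := by
      rcases a with _ | a
      · simp [raiseCoeff]
      · rw [Nat.add_sub_cancel]
    rw [hlast, pow_succ q a, show (q⁻¹ ^ 2)⁻¹ = q ^ 2 by rw [inv_pow, inv_inv]]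
    linear_combination (norm := module) (raiseCoeff_succ hq₀ l a b) • 𝐯 a b -
      (q ^ a * inv_mul_cancel₀ hq₀) • 𝐯 (a + 1) (b + 1)

lemma raiseOp_pow (hq : IsPrimitiveRoot q N) (hN : 1 < N) (l : k) : raiseOp N q l ^ N = 0 := by
  have H := isQuantumTriple_monomialOps hq hN l
  have hcomm : Commute (lowerOp k N) (raiseOp N q l ^ N) :=
    ext_monomialVec fun a b _ _ => by
      have hweight : weightOp N (q⁻¹ ^ 2) l • 𝐯 a b = _ := weightOp_apply _ l a b
      have h := H.f_smul_pow_smul (hq.ne_zero (by omega)) hweight (N - 1)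
      rw [lowerCoeff, Nat.sub_add_cancel hN.le, hq.geom_sum_eq_zero hN, mul_zero, zero_mul,
        zero_smul, add_zero, inv_pow, hq.pow_eq_one, inv_one, one_smul] at h
      exact h
  refine ext_monomialVec fun a b _ _ => ?_
  have hab : 𝐯 a b = (lowerOp k N ^ a) (𝐯 0 b) := by
    rw [lowerOp_pow_apply, zero_add]
  rw [hab, ← Module.End.mul_apply, ← (hcomm.pow_left a).eq, Module.End.mul_apply,
    raiseOp_pow_apply hq hN, monomialVec_eq_zero (by omega), map_zero, LinearMap.zero_apply]

lemma raiseOp_pow_monomialVec_ne_zero (hq : IsPrimitiveRoot q N) (hN : 1 < N) (l : k) :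
    (raiseOp N q l ^ (N - 1)) (𝐯 (N - 1) 0) ≠ 0 := by
  let top : Fin N := ⟨N - 1, by omega⟩
  have hproj (b : ℕ) (hb : b + 1 < N) :
      LinearMap.proj (R := k) (top, (⟨b + 1, hb⟩ : Fin N)) ∘ₗ raiseOp N q l =
        q ^ (N - 1) • LinearMap.proj (top, (⟨b, by omega⟩ : Fin N)) :=
    ext_monomialVec fun a' b' ha' _ => by
      have hcoord : 𝐯 (a' - 1) b' (top, (⟨b + 1, hb⟩ : Fin N)) = 0 :=
        if_neg fun h => by have : N - 1 = a' - 1 := h.1; omega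
      change raiseOp N q l (𝐯 a' b') (top, _) = q ^ (N - 1) * 𝐯 a' b' (top, _)
      rw [raiseOp_apply hq hN, Pi.add_apply, Pi.smul_apply, Pi.smul_apply, hcoord, smul_zero,
        add_zero]
      by_cases h : N - 1 = a' ∧ b = b'
      · obtain ⟨rfl, rfl⟩ := h
        simp [monomialVec, top]
      · rw [monomialVec, if_neg (by simpa [top] using h), monomialVec, if_neg h, smul_zero,
          mul_zero]
  have hcoord (b : ℕ) (hb : b < N) :
      (raiseOp N q l ^ b) (𝐯 (N - 1) 0) (top, ⟨b, hb⟩) ≠ 0 := by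
    induction b with
    | zero => simp [monomialVec, top]
    | succ b ih =>
      rw [pow_succ', Module.End.mul_apply]
      exact (LinearMap.congr_fun (hproj b hb) _).trans_ne
        (mul_ne_zero (pow_ne_zero _ (hq.ne_zero (by omega))) (ih (by omega)))
  exact fun h => hcoord (N - 1) (by omega) (congrFun h _)

end MonomialSpace

section Representation

variable {k : Type} [Field k] {n : ℕ} {q : k}

local notation "𝐄" => E k n q
local notation "𝐅" => F k n q
local notation "𝐯" => monomialVec k (n ^ 2)

lemma exists_algHom [NeZero n] {A : Type*} [Ring A] [Algebra k A] {a b e f : A}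
    (ha : a ^ n = 1) (hb : b ^ n = (a ^ (n - 1)) ^ 2) (hab : Commute a b)
    (hae : QCommute (q ^ n) a e) (haf : QCommute (q ^ n)⁻¹ a f)
    (hbe : QCommute (q ^ n * (q ^ 2)⁻¹) b e) (hbf : QCommute ((q ^ n)⁻¹ * q ^ 2) b f)
    (he : e ^ n ^ 2 = 0) (hf : f ^ n ^ 2 = 0)
    (hfe : f * e = q⁻¹ • (e * f) + 1 - a ^ (n - 1) * b) :
    ∃ ρ : U k n q →ₐ[k] A,
      ρ (K k n q) = a ∧ ρ (Kh k n q) = b ∧ ρ 𝐄 = e ∧ ρ 𝐅 = f := by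
  have hn : 1 ≤ n ^ 2 := NeZero.one_le
  have ha' : a * a ^ (n - 1) = 1 := by rw [← pow_succ', Nat.sub_add_cancel NeZero.one_le, ha]
  have hb' : b * b ^ (n ^ 2 - 1) = 1 := by
    rw [← pow_succ', Nat.sub_add_cancel hn, sq n, pow_mul, hb, ← pow_mul, pow_right_comm,
      pow_mul', ha, one_pow, one_pow]
  have conj {c : k} {x x' y : A} (h : QCommute c x y) (hx : x * x' = 1) : x * y * x' = c • y := by
    rw [h, smul_mul_assoc, mul_assoc, hx, mul_one]
  let φ := FreeAlgebra.lift k ![a, b, e, f]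
  have hrel : ∀ ⦃x y⦄, Rel k n q x y → φ x = φ y := by
    rintro _ _ (_ | _ | _ | _ | _ | _ | _ | _ | _ | _) <;>
      simp only [φ, map_mul, map_pow, map_smul, map_sub, map_one, map_zero,
        FreeAlgebra.lift_ι_apply, Matrix.cons_val]
    exacts [ha, hb, hab, conj hae ha', conj haf ha', conj hbe hb', conj hbf hb', he, hf,
      by rw [hfe]; abel]
  refine ⟨RingQuot.liftAlgHom k ⟨φ, hrel⟩, ?_, ?_, ?_, ?_⟩ <;>
    simp [K, Kh, E, F, φ]

lemma exists_algHom_monomialOps [NeZero n] {κ κh : k} (hn : 1 < n)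
    (hq : IsPrimitiveRoot q (n ^ 2)) (hκ : κ ^ n = 1) (hκh : κh ^ n = (κ ^ (n - 1)) ^ 2) :
    ∃ ρ : U k n q →ₐ[k] Module.End k (Fin (n ^ 2) × Fin (n ^ 2) → k),
      ρ (K k n q) = weightOp (n ^ 2) (q ^ n) κ ∧
      ρ (Kh k n q) = weightOp (n ^ 2) (q ^ n * (q ^ 2)⁻¹) κh ∧
      ρ 𝐄 = raiseOp (n ^ 2) q (κ ^ (n - 1) * κh) ∧ ρ 𝐅 = lowerOp k (n ^ 2) := by
  have hN : 1 < n ^ 2 := Nat.one_lt_pow two_ne_zero hn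
  have hq₀ : q ≠ 0 := hq.ne_zero (by omega)
  have hqn₀ : q ^ n ≠ 0 := pow_ne_zero _ hq₀
  have hqn : (q ^ n) ^ n = 1 := by rw [← pow_mul, ← sq, hq.pow_eq_one]
  have hqn' : (q ^ n) ^ (n - 1) = (q ^ n)⁻¹ :=
    eq_inv_of_mul_eq_one_left (by rw [← pow_succ, Nat.sub_add_cancel hn.le, hqn])
  refine exists_algHom ?_ ?_ ?_ (qCommute_weightOp_raiseOp hq hN hqn₀ _ _)
    (qCommute_weightOp_lowerOp _ _)
    (qCommute_weightOp_raiseOp hq hN (mul_ne_zero hqn₀ (inv_ne_zero (pow_ne_zero _ hq₀))) _ _)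
    ?_ (raiseOp_pow hq hN _) lowerOp_pow ?_
  · rw [weightOp_pow, hqn, hκ, weightOp_one_one]
  · rw [weightOp_pow, weightOp_pow, weightOp_pow, hκh, hqn', mul_pow, hqn, one_mul, inv_pow,
      inv_pow, pow_right_comm]
  · rw [Commute, SemiconjBy, weightOp_mul, weightOp_mul, mul_comm, mul_comm κ]
  · have h := qCommute_weightOp_lowerOp (N := n ^ 2) (q ^ n * (q ^ 2)⁻¹) κh
    rwa [mul_inv, inv_inv] at h
  · rw [weightOp_pow, weightOp_mul, hqn', inv_mul_cancel_left₀ hqn₀, ← inv_pow]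
    exact (isQuantumTriple_monomialOps hq hN _).f_e

lemma exists_weights [NeZero n] (h4 : 4 ∣ n) (hq : IsPrimitiveRoot q (n ^ 2)) (i j : ℕ) :
    ∃ κ κh : k, κ ^ n = 1 ∧ κh ^ n = (κ ^ (n - 1)) ^ 2 ∧ κ ^ (n - 1) * κh = q ^ (2 * i) ∧
      κ * κh ^ (n / 2) = (-1) ^ j := by
  obtain ⟨a, hn⟩ := h4
  obtain ⟨b, hab⟩ : ∃ b, a = b + 1 :=
    Nat.exists_eq_add_one_of_ne_zero fun h => NeZero.ne n (by rw [hn, h, mul_zero])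
  obtain ⟨l, hl⟩ : ∃ l, l = q ^ (2 * i) := ⟨_, rfl⟩
  have hl_pow {m : ℕ} (c : ℕ) (hm : m = 8 * a ^ 2 * c) : l ^ m = 1 := by
    rw [hl, hm, ← pow_mul, show 2 * i * (8 * a ^ 2 * c) = n ^ 2 * (i * c) by rw [hn]; ring,
      pow_mul, hq.pow_eq_one, one_pow]
  have hl₀ : l ≠ 0 := hl ▸ pow_ne_zero _ (hq.ne_zero (NeZero.ne _))
  -- `κh = κ * l` is forced, and `t` is chosen so that `κ * κh ^ (n / 2)` is the sign alone.
  let t := 2 * a * (2 * b + 1)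
  obtain ⟨κ, hκ_def⟩ : ∃ κ, κ = (-1) ^ j * l ^ t := ⟨_, rfl⟩
  have hκ_sq : κ ^ 2 = l ^ (2 * t) := by
    rw [hκ_def, mul_pow, pow_right_comm, neg_one_sq, one_pow, one_mul, ← pow_mul, mul_comm]
  have hκ : κ ^ n = 1 := by
    rw [hn, show 4 * a = 2 * (2 * a) by ring, pow_mul, hκ_sq, ← pow_mul]
    exact hl_pow (2 * b + 1) (by ring)
  have hκ' : κ ^ (n - 1) * κ = 1 := by rw [← pow_succ, Nat.sub_add_cancel NeZero.one_le, hκ]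
  refine ⟨κ, κ * l, hκ, ?_, by rw [← mul_assoc, hκ', one_mul, hl], ?_⟩
  · refine mul_right_cancel₀ (b := κ ^ 2) (hκ_sq ▸ pow_ne_zero _ hl₀) ?_
    rw [mul_pow, hκ, one_mul, ← mul_pow, hκ', one_pow, hκ_sq, ← pow_add]
    exact hl_pow 1 (by rw [hn]; simp only [t, hab]; ring)
  · rw [show n / 2 = 2 * a by omega, mul_pow, pow_mul κ, hκ_sq, hκ_def, mul_assoc, ← pow_mul,
      ← pow_add, ← pow_add, hl_pow a (by simp only [t, hab]; ring), mul_one]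

lemma exists_algHom_apply_eIdem [NeZero n] (h4 : 4 ∣ n) (hq : IsPrimitiveRoot q (n ^ 2))
    (i : ℕ) {j : ℕ} (hj : j ≤ 1) :
    ∃ ρ : U k n q →ₐ[k] Module.End k (Fin (n ^ 2) × Fin (n ^ 2) → k),
      ρ 𝐄 = raiseOp (n ^ 2) q (q ^ (2 * i)) ∧ ρ 𝐅 = lowerOp k (n ^ 2) ∧
        ρ (eIdem k n q i j) (𝐯 0 0) = 𝐯 0 0 := by
  have h2 : 2 ∣ n := (by norm_num : 2 ∣ 4).trans h4
  have hn : 1 < n := lt_of_lt_of_le (by norm_num) (Nat.le_of_dvd NeZero.one_le h4)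
  obtain ⟨κ, κh, hκ, hκh, hl, hσ⟩ := exists_weights h4 hq i j
  obtain ⟨ρ, hK, hKh, hE, hF⟩ := exists_algHom_monomialOps hn hq hκ hκh
  refine ⟨ρ, by rw [hE, hl], hF, ?_⟩
  let _ := Module.compHom (Fin (n ^ 2) × Fin (n ^ 2) → k) ρ.toRingHom
  have smul_def (x : U k n q) (v : Fin (n ^ 2) × Fin (n ^ 2) → k) : x • v = ρ x v := rfl
  have : IsScalarTower k (U k n q) (Fin (n ^ 2) × Fin (n ^ 2) → k) :=
    ⟨fun c x v => by rw [smul_def, map_smul]; rfl⟩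
  have hv : IsWeightVector n q (q ^ (2 * i)) ((-1) ^ j) (𝐯 0 0) := by
    constructor
    · rw [smul_def, ratio, Kinv, map_mul, map_pow, hK, hKh, weightOp_pow, weightOp_mul,
        weightOp_apply, pow_zero, pow_zero, one_mul, one_mul, hl]
    · rw [smul_def, parity, map_mul, map_pow, hK, hKh, weightOp_pow, weightOp_mul,
        weightOp_apply, pow_zero, pow_zero, one_mul, one_mul, hσ]
  rw [← smul_def]
  exact hv.eIdem_smul h2 hq hj

lemma linearIndependent_F_pow_mul_E_pow_mul_eIdem [NeZero n] (h4 : 4 ∣ n)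
    (hq : IsPrimitiveRoot q (n ^ 2)) (i : ℕ) {j : ℕ} (hj : j ≤ 1) :
    LinearIndependent k fun p : Fin (n ^ 2) × Fin (n ^ 2) =>
      𝐅 ^ (p.1 : ℕ) * 𝐄 ^ (p.2 : ℕ) * eIdem k n q i j := by
  have hN : 1 < n ^ 2 := Nat.one_lt_pow two_ne_zero
    (lt_of_lt_of_le (by norm_num) (Nat.le_of_dvd NeZero.one_le h4))
  obtain ⟨ρ, hE, hF, he⟩ := exists_algHom_apply_eIdem h4 hq i hj
  refine .of_comp ((LinearMap.applyₗ (𝐯 0 0)).comp ρ.toLinearMap) ?_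
  convert linearIndependent_monomialVec (k := k) (N := n ^ 2) with p
  simp only [Function.comp_apply, LinearMap.comp_apply, AlgHom.toLinearMap_apply,
    LinearMap.applyₗ_apply_apply, map_mul, map_pow, Module.End.mul_apply, he, hE, hF]
  rw [raiseOp_pow_apply hq hN, lowerOp_pow_apply, zero_add, zero_add]

lemma E_pow_mul_F_pow_mul_eIdem_ne_zero [NeZero n] (h4 : 4 ∣ n)
    (hq : IsPrimitiveRoot q (n ^ 2)) (i : ℕ) {j : ℕ} (hj : j ≤ 1) :
    𝐄 ^ (n ^ 2 - 1) * (𝐅 ^ (n ^ 2 - 1) * eIdem k n q i j) ≠ 0 := by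
  have hN : 1 < n ^ 2 := Nat.one_lt_pow two_ne_zero
    (lt_of_lt_of_le (by norm_num) (Nat.le_of_dvd NeZero.one_le h4))
  obtain ⟨ρ, hE, hF, he⟩ := exists_algHom_apply_eIdem h4 hq i hj
  intro h
  apply raiseOp_pow_monomialVec_ne_zero hq hN (q ^ (2 * i))
  have := congrArg (fun x => ρ x (𝐯 0 0)) h
  simpa only [map_mul, map_pow, Module.End.mul_apply, he, hE, hF, lowerOp_pow_apply, zero_add,
    map_zero, LinearMap.zero_apply] using this

end Representation

section Monomials

variable {k : Type} [Field k] {n : ℕ} {q : k}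

local notation "𝐊" => K k n q
local notation "𝐊ₕ" => Kh k n q
local notation "𝐄" => E k n q
local notation "𝐅" => F k n q

variable (k n q) in
/-- The PBW monomial `F^a K^c K̂^d E^b`, with the exponents listed in the order of the factors;
unlike in `pbw` they are unrestricted. -/
def pbwMonomial (a c d b : ℕ) : U k n q :=
  𝐅 ^ a * 𝐊 ^ c * 𝐊ₕ ^ d * 𝐄 ^ b

local notation "𝐦" => pbwMonomial k n q

lemma F_mul_pbwMonomial (a c d b : ℕ) : 𝐅 * 𝐦 a c d b = 𝐦 (a + 1) c d b := by
  simp only [pbwMonomial, pow_succ', mul_assoc]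

variable [NeZero n]

lemma K_mul_pbwMonomial (a c d b : ℕ) :
    𝐊 * 𝐦 a c d b = ((q ^ n)⁻¹) ^ a • 𝐦 a (c + 1) d b := by
  simp only [pbwMonomial]
  rw [← mul_assoc, ← mul_assoc, ← mul_assoc, qCommute_K_F.pow_right a, smul_mul_assoc,
    smul_mul_assoc, smul_mul_assoc, pow_succ', ← mul_assoc]

lemma Kh_mul_pbwMonomial (a c d b : ℕ) :
    𝐊ₕ * 𝐦 a c d b = ((q ^ n)⁻¹ * q ^ 2) ^ a • 𝐦 a c (d + 1) b := by
  simp only [pbwMonomial]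
  rw [← mul_assoc, ← mul_assoc, ← mul_assoc, qCommute_Kh_F.pow_right a, smul_mul_assoc,
    mul_assoc _ 𝐊ₕ, (commute_K_Kh.symm.pow_right c).eq, smul_mul_assoc, smul_mul_assoc,
    pow_succ' 𝐊ₕ, ← mul_assoc, ← mul_assoc]

lemma pbwMonomial_mem_pbw {a : ℕ} (ha : a ≤ n ^ 2 - 2) (c d b : ℕ) :
    𝐦 a c d b ∈ pbw k n q := by
  have hn : 0 < n := NeZero.pos n
  have hN : 0 < n ^ 2 := NeZero.pos _
  rcases lt_or_ge b (n ^ 2) with hb | hb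
  · rw [pbwMonomial, pow_eq_pow_mod c K_pow, pow_eq_pow_mod d Kh_pow_sq]
    exact Submodule.subset_span ⟨a, b, _, _, ha, Nat.le_sub_one_of_lt hb,
      Nat.le_sub_one_of_lt (Nat.mod_lt _ hn), Nat.le_sub_one_of_lt (Nat.mod_lt _ hN), rfl⟩
  · rw [pbwMonomial, pow_eq_zero_of_le hb E_pow, mul_zero]
    exact zero_mem _

lemma E_mul_pbwMonomial_zero (hq : IsPrimitiveRoot q (n ^ 2)) (c d b : ℕ) :
    ∃ r : k, 𝐄 * 𝐦 0 c d b = r • 𝐦 0 c d (b + 1) := by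
  have hq₀ : q ≠ 0 := hq.ne_zero (NeZero.ne _)
  have h : QCommute ((q ^ n) ^ c * (q ^ n * (q ^ 2)⁻¹) ^ d) (𝐊 ^ c * 𝐊ₕ ^ d) 𝐄 :=
    (qCommute_K_E.pow_left c).mul_left (qCommute_Kh_E.pow_left d)
  refine ⟨((q ^ n) ^ c * (q ^ n * (q ^ 2)⁻¹) ^ d)⁻¹, ?_⟩
  simp only [pbwMonomial, pow_zero, one_mul]
  rw [← mul_assoc, h.symm (by simp [hq₀]), smul_mul_assoc, mul_assoc _ 𝐄, pow_succ' 𝐄]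

lemma E_mul_pbwMonomial_succ (hq : IsPrimitiveRoot q (n ^ 2)) (a c d b : ℕ) :
    ∃ r r₁ r₂ : k, 𝐄 * 𝐦 (a + 1) c d b =
      r • 𝐦 (a + 1) c d (b + 1) + r₁ • 𝐦 a c d b + r₂ • 𝐦 a (c + (n - 1)) (d + 1) b := by
  obtain ⟨r₁, r₂, h⟩ := (isQuantumTriple hq).exists_e_mul_f_pow_succ (hq.ne_zero (NeZero.ne _)) a
  obtain ⟨r, hr⟩ := E_mul_pbwMonomial_zero hq c d b
  have split (a c d b : ℕ) : 𝐦 a c d b = 𝐅 ^ a * 𝐦 0 c d b := by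
    simp only [pbwMonomial, pow_zero, one_mul, mul_assoc]
  have hratio : ratio k n q * 𝐦 0 c d b = 𝐦 0 (c + (n - 1)) (d + 1) b := by
    simp only [pbwMonomial, ratio, Kinv, pow_zero, one_mul]
    rw [mul_assoc, ← mul_assoc 𝐊ₕ, ← mul_assoc 𝐊ₕ, (commute_K_Kh.symm.pow_right c).eq,
      mul_assoc _ 𝐊ₕ, ← pow_succ', ← mul_assoc, ← mul_assoc, ← pow_add, add_comm c]
  refine ⟨q ^ (a + 1) * r, r₁, r₂, ?_⟩
  simp only [split (a + 1), split a]
  rw [← mul_assoc, h, add_mul, add_mul, smul_mul_assoc, smul_mul_assoc, smul_mul_assoc,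
    mul_assoc _ 𝐄, hr, mul_assoc _ (ratio k n q), hratio, mul_smul_comm, smul_smul]

theorem span_pbwMonomial_eq_top (hq : IsPrimitiveRoot q (n ^ 2)) :
    Submodule.span k {x | ∃ a c d b, x = 𝐦 a c d b} = ⊤ := by
  set W := Submodule.span k {x | ∃ a c d b, x = 𝐦 a c d b}
  have mem (a c d b : ℕ) : 𝐦 a c d b ∈ W := Submodule.subset_span ⟨a, c, d, b, rfl⟩
  have stable {x : U k n q} (hx : ∀ a c d b, x * 𝐦 a c d b ∈ W) : ∀ w ∈ W, x • w ∈ W := by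
    intro w hw
    refine (Submodule.span_le.2 ?_ : W ≤ W.comap (LinearMap.mulLeft k x)) hw
    rintro _ ⟨a, c, d, b, rfl⟩
    exact hx a c d b
  rw [eq_top_iff]
  rintro x -
  rw [← mul_one x, show (1 : U k n q) = 𝐦 0 0 0 0 by simp [pbwMonomial]]
  refine smul_mem_of_generators (stable fun a c d b => ?_) (stable fun a c d b => ?_)
    (stable fun a c d b => ?_) (stable fun a c d b => ?_) x (mem 0 0 0 0)
  · rw [K_mul_pbwMonomial]
    exact W.smul_mem _ (mem _ _ _ _)
  · rw [Kh_mul_pbwMonomial]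
    exact W.smul_mem _ (mem _ _ _ _)
  · cases a with
    | zero =>
      obtain ⟨r, hr⟩ := E_mul_pbwMonomial_zero hq c d b
      exact hr ▸ W.smul_mem r (mem _ _ _ _)
    | succ a =>
      obtain ⟨r, r₁, r₂, hr⟩ := E_mul_pbwMonomial_succ hq a c d b
      exact hr ▸ add_mem (add_mem (W.smul_mem r (mem _ _ _ _)) (W.smul_mem r₁ (mem _ _ _ _)))
        (W.smul_mem r₂ (mem _ _ _ _))
  · rw [F_mul_pbwMonomial]
    exact mem _ _ _ _

lemma exists_mem_pbw_F_mul_eq (hq : IsPrimitiveRoot q (n ^ 2)) (y : U k n q) :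
    ∃ x ∈ pbw k n q, 𝐅 * x = 𝐅 * y := by
  suffices ⊤ ≤ ((pbw k n q).map (LinearMap.mulLeft k 𝐅)).comap (LinearMap.mulLeft k 𝐅) from
    this (Submodule.mem_top (x := y))
  rw [← span_pbwMonomial_eq_top hq, Submodule.span_le]
  rintro _ ⟨a, c, d, b, rfl⟩
  rcases le_or_gt a (n ^ 2 - 2) with ha | ha
  · exact ⟨_, pbwMonomial_mem_pbw ha c d b, rfl⟩
  · refine ⟨0, zero_mem _, ?_⟩
    rw [map_zero, LinearMap.mulLeft_apply, F_mul_pbwMonomial, pbwMonomial,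
      pow_eq_zero_of_le (by omega) F_pow, zero_mul, zero_mul, zero_mul]

lemma K_mul_mem_pbw {x : U k n q} (hx : x ∈ pbw k n q) : 𝐊 * x ∈ pbw k n q := by
  suffices pbw k n q ≤ (pbw k n q).comap (LinearMap.mulLeft k 𝐊) from this hx
  refine Submodule.span_le.2 ?_
  rintro _ ⟨a, b, c, d, ha, -, -, -, rfl⟩
  rw [SetLike.mem_coe, Submodule.mem_comap, LinearMap.mulLeft_apply, ← pbwMonomial,
    K_mul_pbwMonomial]
  exact Submodule.smul_mem _ _ (pbwMonomial_mem_pbw ha _ _ _)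

lemma Kh_mul_mem_pbw {x : U k n q} (hx : x ∈ pbw k n q) : 𝐊ₕ * x ∈ pbw k n q := by
  suffices pbw k n q ≤ (pbw k n q).comap (LinearMap.mulLeft k 𝐊ₕ) from this hx
  refine Submodule.span_le.2 ?_
  rintro _ ⟨a, b, c, d, ha, -, -, -, rfl⟩
  rw [SetLike.mem_coe, Submodule.mem_comap, LinearMap.mulLeft_apply, ← pbwMonomial,
    Kh_mul_pbwMonomial]
  exact Submodule.smul_mem _ _ (pbwMonomial_mem_pbw ha _ _ _)

end Monomials

section LeftIdeal

variable {k : Type} [Field k] {n : ℕ} {q : k}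

local notation "𝐊" => K k n q
local notation "𝐊ₕ" => Kh k n q
local notation "𝐄" => E k n q
local notation "𝐅" => F k n q

variable [NeZero n]

lemma IsWeightVector.exists_K_pow_smul_Kh_pow_smul {M : Type*} [AddCommGroup M] [Module k M]
    [Module (U k n q) M] [IsScalarTower k (U k n q) M] {l σ : k} {v : M} (h4 : 4 ∣ n)
    (hv : IsWeightVector n q l σ v) (c d : ℕ) : ∃ r : k, 𝐊 ^ c • 𝐊ₕ ^ d • v = r • v := by
  have pow_smul {x : U k n q} {r : k} (h : x • v = r • v) (m : ℕ) : x ^ m • v = r ^ m • v := by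
    induction m with
    | zero => simp
    | succ m ih => rw [pow_succ, mul_smul, h, smul_comm, ih, smul_smul, pow_succ']
  obtain ⟨r, hK⟩ : ∃ r : k, 𝐊 • v = r • v :=
    ⟨_, by rw [K_eq_parity_mul_ratio_pow h4, mul_smul, pow_smul hv.1, smul_comm, hv.2, smul_smul]⟩
  have hKh : 𝐊ₕ • v = (l * r) • v := by
    rw [← K_mul_ratio, mul_smul, hv.1, smul_comm, hK, smul_smul]
  exact ⟨(l * r) ^ d * r ^ c, by rw [pow_smul hKh, smul_comm, pow_smul hK, smul_smul]⟩

lemma mul_eIdem_mem_span_of_mem_pbw (h4 : 4 ∣ n) (hq : IsPrimitiveRoot q (n ^ 2)) (i : ℕ)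
    {j : ℕ} (hj : j ≤ 1) {x : U k n q} (hx : x ∈ pbw k n q) :
    x * eIdem k n q i j ∈ Submodule.span k (Set.range fun p : Fin (n ^ 2 - 1) × Fin (n ^ 2) =>
      𝐅 ^ (p.1 : ℕ) * 𝐄 ^ (p.2 : ℕ) * eIdem k n q i j) := by
  have h2 : 2 ∣ n := (by norm_num : 2 ∣ 4).trans h4
  have hN : 1 < n ^ 2 := Nat.one_lt_pow two_ne_zero
    (lt_of_lt_of_le (by norm_num) (Nat.le_of_dvd NeZero.one_le h4))
  rw [← LinearMap.mulRight_apply (R := k), ← Submodule.mem_comap]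
  refine Submodule.span_le.2 ?_ hx
  rintro _ ⟨a, b, c, d, ha, hb, -, -, rfl⟩
  have he : IsWeightVector n q (q ^ (2 * i)) ((-1) ^ j) (eIdem k n q i j) := by
    simpa only [smul_eq_mul, mul_one] using isWeightVector_eIdem_smul h2 hq i hj (1 : U k n q)
  obtain ⟨r, hr⟩ := (he.pow_E_smul h2 hq b).exists_K_pow_smul_Kh_pow_smul h4 c d
  simp only [smul_eq_mul] at hr
  rw [SetLike.mem_coe, Submodule.mem_comap, LinearMap.mulRight_apply, mul_assoc, mul_assoc,
    mul_assoc, hr, mul_smul_comm, ← mul_assoc]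
  exact Submodule.smul_mem _ _ (Submodule.subset_span
    ⟨(⟨a, by omega⟩, ⟨b, by omega⟩), rfl⟩)

theorem eq_of_F_mul_eq (h4 : 4 ∣ n) (hq : IsPrimitiveRoot q (n ^ 2)) {x y : U k n q}
    (hx : x ∈ pbw k n q) (hy : y ∈ pbw k n q) (h : 𝐅 * x = 𝐅 * y) : x = y := by
  have h2 : 2 ∣ n := (by norm_num : 2 ∣ 4).trans h4
  have key (i : ℕ) {j : ℕ} (hj : j ≤ 1) : (x - y) * eIdem k n q i j = 0 := by
    let shift (p : Fin (n ^ 2 - 1) × Fin (n ^ 2)) : Fin (n ^ 2) × Fin (n ^ 2) :=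
      (⟨p.1 + 1, by omega⟩, p.2)
    have hshift : Function.Injective shift := fun p p' hp => by
      simpa [shift, Prod.ext_iff, Fin.ext_iff] using hp
    have hind : LinearIndependent k (LinearMap.mulLeft k 𝐅 ∘
        fun p : Fin (n ^ 2 - 1) × Fin (n ^ 2) =>
          𝐅 ^ (p.1 : ℕ) * 𝐄 ^ (p.2 : ℕ) * eIdem k n q i j) := by
      convert (linearIndependent_F_pow_mul_E_pow_mul_eIdem h4 hq i hj).comp shift hshift
      ext p
      simp only [Function.comp_apply, LinearMap.mulLeft_apply, shift, pow_succ', mul_assoc]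
    refine Submodule.disjoint_def.1 (Submodule.range_ker_disjoint hind) _
      (mul_eIdem_mem_span_of_mem_pbw h4 hq i hj (sub_mem hx hy)) ?_
    rw [LinearMap.mem_ker, LinearMap.mulLeft_apply, ← mul_assoc, mul_sub, h, sub_self, zero_mul]
  rw [← sub_eq_zero, ← mul_one (x - y), ← sum_eIdem h2 hq, Finset.mul_sum]
  refine Finset.sum_eq_zero fun i _ => ?_
  rw [Finset.mul_sum]
  exact Finset.sum_eq_zero fun j hj => key i (Finset.mem_range_succ_iff.1 hj)

lemma isWeightVector_of_F_mul (h4 : 4 ∣ n) (hq : IsPrimitiveRoot q (n ^ 2)) {x : U k n q}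
    (hx : x ∈ pbw k n q) {l σ : k} (h : IsWeightVector n q (q ^ 2 * l) (-σ) (𝐅 * x)) :
    IsWeightVector n q l σ x := by
  have h2 : 2 ∣ n := (by norm_num : 2 ∣ 4).trans h4
  have pow_mul_mem {y : U k n q} (hy : ∀ x ∈ pbw k n q, y * x ∈ pbw k n q) (m : ℕ) :
      ∀ x ∈ pbw k n q, y ^ m * x ∈ pbw k n q := by
    induction m with
    | zero => simp
    | succ m ih => exact fun x hx => by rw [pow_succ, mul_assoc]; exact ih _ (hy x hx)
  have eigenvector {t : U k n q} {c r : k} (hc : c ≠ 0) (ht : QCommute c t 𝐅)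
      (htx : t * x ∈ pbw k n q) (hr : t * (𝐅 * x) = (c * r) • (𝐅 * x)) : t * x = r • x := by
    refine eq_of_F_mul_eq h4 hq htx (Submodule.smul_mem _ _ hx) (smul_right_injective _ hc ?_)
    change c • (𝐅 * (t * x)) = c • (𝐅 * (r • x))
    rw [mul_smul_comm, smul_smul, ← hr, ← mul_assoc, ← mul_assoc, ht, smul_mul_assoc]
  obtain ⟨hl, hσ⟩ := h
  refine ⟨eigenvector (pow_ne_zero 2 (hq.ne_zero (NeZero.ne _))) (isQuantumTriple hq).g_f ?_ hl,
    eigenvector (neg_ne_zero.2 one_ne_zero) (qCommute_parity_F h2 hq) ?_ ?_⟩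
  · rw [ratio, mul_assoc]
    exact pow_mul_mem (fun _ => K_mul_mem_pbw) _ _ (Kh_mul_mem_pbw hx)
  · rw [parity, mul_assoc]
    exact K_mul_mem_pbw (pow_mul_mem (fun _ => Kh_mul_mem_pbw) _ _ hx)
  · rwa [neg_one_mul]

theorem gam_mem_pbw_and_F_mul_gam (h4 : 4 ∣ n) (hq : IsPrimitiveRoot q (n ^ 2)) {i : ℕ}
    (hi₁ : 1 ≤ i) (hi : 2 * i ≤ n ^ 2) (j : ℕ) :
    gam k n q i j ∈ pbw k n q ∧ 𝐅 * gam k n q i j = beta k n q i j := by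
  have hex : ∃! x, x ∈ pbw k n q ∧ 𝐅 * x = beta k n q i j := by
    obtain ⟨y, hy⟩ := (isQuantumTriple hq).exists_e_pow_mul_f_pow (hq.ne_zero (NeZero.ne _)) 1
      (2 * i - 2)
    have hβ : beta k n q i j = 𝐅 * (y * (𝐅 ^ (n ^ 2 - 2 * i) * eIdem k n q i j)) := by
      rw [beta, alpha, show n ^ 2 - 1 = 1 + (2 * i - 2) + (n ^ 2 - 2 * i) by omega, pow_add 𝐅,
        mul_assoc, ← mul_assoc, hy, pow_one, mul_assoc]
    obtain ⟨x, hx, hxy⟩ := exists_mem_pbw_F_mul_eq hq (y * (𝐅 ^ (n ^ 2 - 2 * i) * eIdem k n q i j))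
    exact ⟨x, ⟨hx, hxy.trans hβ.symm⟩, fun x' hx' =>
      eq_of_F_mul_eq h4 hq hx'.1 hx (hx'.2.trans (hxy.trans hβ.symm).symm)⟩
  rw [gam, dif_pos hex]
  exact hex.choose_spec.1

lemma isLowestWeightVector_alpha (h4 : 4 ∣ n) (hq : IsPrimitiveRoot q (n ^ 2)) {i j : ℕ}
    (hi : 1 ≤ i) (hj : j ≤ 1) :
    IsLowestWeightVector n q (2 * i - 2) (-(-1) ^ j) (alpha k n q i j) := by
  have h2 : 2 ∣ n := (by norm_num : 2 ∣ 4).trans h4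
  have hN : 1 ≤ n ^ 2 := NeZero.one_le
  have hodd : Odd (n ^ 2 - 1) :=
    Nat.Even.sub_odd hN ((even_iff_two_dvd.2 h2).pow_of_ne_zero two_ne_zero) odd_one
  refine ⟨fun h => E_pow_mul_F_pow_mul_eIdem_ne_zero h4 hq i hj ?_, ?_, ?_⟩
  · rw [← alpha, h, mul_zero]
  · have h := (isWeightVector_eIdem_smul h2 hq i hj (1 : U k n q)).pow_F_smul h2 hq (n ^ 2 - 1)
    rw [hodd.neg_one_pow, neg_one_mul, ← pow_mul, ← pow_add,
      show 2 * (n ^ 2 - 1) + 2 * i = n ^ 2 * 2 + (2 * i - 2) by omega, pow_add, pow_mul,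
      hq.pow_eq_one, one_pow, one_mul] at h
    simpa only [smul_eq_mul, mul_one, alpha] using h
  · rw [alpha, smul_eq_mul, ← mul_assoc, ← pow_succ', Nat.sub_add_cancel hN, F_pow, zero_mul]

lemma isWeightVector_gam (h4 : 4 ∣ n) (hq : IsPrimitiveRoot q (n ^ 2)) {i j : ℕ}
    (hi₁ : 1 ≤ i) (hi : 2 * i ≤ n ^ 2) (hj : j ≤ 1) :
    IsWeightVector n q (q ^ (n ^ 2 - 2 * i)) ((-1) ^ j) (gam k n q i j) := by
  have h2 : 2 ∣ n := (by norm_num : 2 ∣ 4).trans h4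
  obtain ⟨hmem, hF⟩ := gam_mem_pbw_and_F_mul_gam h4 hq hi₁ hi j
  refine isWeightVector_of_F_mul h4 hq hmem ?_
  have h := (isLowestWeightVector_alpha h4 hq hi₁ hj).isWeightVector.pow_E_smul h2 hq (2 * i - 2)
  have heven : Even (2 * i - 2) := ⟨i - 1, by omega⟩
  rw [inv_sq_pow_mul_pow hq (D' := 2 + (n ^ 2 - 2 * i)) (by omega), heven.neg_one_pow, one_mul,
    pow_add] at h
  rwa [hF]

end LeftIdeal

section Socle

variable {k : Type} [Field k] {n : ℕ} [NeZero n] {q : k} {M : Type*} [AddCommGroup M]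
  [Module k M] [Module (U k n q) M] [IsScalarTower k (U k n q) M]

local notation "𝐄" => E k n q
local notation "𝐅" => F k n q

lemma IsLowestWeightVector.exists_pow_F_smul_pow_pred_E_smul {D D' : ℕ} {σ : k} {y : M}
    (h2 : 2 ∣ n) (hq : IsPrimitiveRoot q (n ^ 2)) (hD : D + D' + 2 = n ^ 2)
    (hy : IsLowestWeightVector n q D σ y) (hne : 𝐄 ^ (n ^ 2 - 1) • y ≠ 0) :
    IsLowestWeightVector n q D' ((-1) ^ (D + 1) * σ) (𝐄 ^ (D + 1) • y) ∧
      ∃ c : k, c ≠ 0 ∧ 𝐅 ^ D' • 𝐄 ^ (n ^ 2 - 1) • y = c • 𝐄 ^ (D + 1) • y := by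
  have split : 𝐄 ^ (n ^ 2 - 1) • y = 𝐄 ^ D' • 𝐄 ^ (D + 1) • y := by
    rw [← mul_smul, ← pow_add, show n ^ 2 - 1 = D' + (D + 1) by omega]
  have hz := hy.pow_succ_E_smul h2 hq hD fun h => hne (by rw [split, h, smul_zero])
  exact ⟨hz, split ▸ hz.exists_pow_F_smul_pow_E_smul hq (by omega)⟩

lemma exists_pow_F_smul_pow_E_smul_of_F_smul_eq {D D' : ℕ} {σ τ : k} {x y : M}
    (h2 : 2 ∣ n) (hq : IsPrimitiveRoot q (n ^ 2)) (hD : D + D' + 2 = n ^ 2)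
    (hy : IsLowestWeightVector n q D σ y) (hne : 𝐄 ^ (n ^ 2 - 1) • y ≠ 0)
    (hx : IsWeightVector n q (q ^ D') τ x) (hF : 𝐅 • x = 𝐄 ^ D • y) :
    ∃ c : k, c ≠ 0 ∧ 𝐅 ^ (n ^ 2 - 1) • 𝐄 ^ (n ^ 2 - 1) • x = c • 𝐄 ^ (D + 1) • y := by
  have H := isQuantumTriple hq
  have hq₀ : q ≠ 0 := hq.ne_zero (NeZero.ne _)
  obtain ⟨-, c, hc, hFE⟩ := hy.exists_pow_F_smul_pow_pred_E_smul h2 hq hD hne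
  have hFw : 𝐅 • 𝐄 ^ (D' + 1) • x = q⁻¹ ^ (D' + 1) • 𝐄 ^ (n ^ 2 - 1) • y := by
    rw [H.f_smul_pow_succ_smul hq₀ hx.1, hF, ← mul_smul (_ ^ _), ← pow_add,
      show D' + 1 + D = n ^ 2 - 1 by omega]
  have hgw : ratio k n q • 𝐄 ^ (D' + 1) • x = q ^ D • 𝐄 ^ (D' + 1) • x := by
    rw [← inv_sq_pow_mul_pow hq (show D' + n ^ 2 = 2 * (D' + 1) + D by omega)]
    exact (hx.pow_E_smul h2 hq (D' + 1)).1
  obtain ⟨d, hd, hFEw⟩ := H.exists_pow_smul_pow_smul hq (show D < n ^ 2 by omega) hgw <| by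
    rw [hFw, smul_comm, ← mul_smul, ← pow_succ', Nat.sub_add_cancel NeZero.one_le, E_pow,
      zero_smul, smul_zero]
  refine ⟨d * q⁻¹ ^ (D' + 1) * c, by simp [hd, hc, hq₀], ?_⟩
  calc 𝐅 ^ (n ^ 2 - 1) • 𝐄 ^ (n ^ 2 - 1) • x
      = 𝐅 ^ D' • 𝐅 • 𝐅 ^ D • 𝐄 ^ D • 𝐄 ^ (D' + 1) • x := by
        rw [show 𝐅 ^ (n ^ 2 - 1) = 𝐅 ^ D' * (𝐅 * 𝐅 ^ D) by
            rw [← pow_succ', ← pow_add, show D' + (D + 1) = n ^ 2 - 1 by omega],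
          show 𝐄 ^ (n ^ 2 - 1) = 𝐄 ^ D * 𝐄 ^ (D' + 1) by
            rw [← pow_add, show D + (D' + 1) = n ^ 2 - 1 by omega]]
        simp only [mul_smul]
    _ = _ := by
        rw [hFEw, smul_comm 𝐅, hFw, smul_comm _ d, smul_comm _ (q⁻¹ ^ (D' + 1)), hFE, smul_smul,
          smul_smul, mul_assoc]

lemma mem_orbitSpan_of_F_smul_eq {D : ℕ} {l l' σ τ : k} {x y w : M} (h4 : 4 ∣ n)
    (hq : IsPrimitiveRoot q (n ^ 2)) (hy : IsWeightVector n q l σ y) (hFy : 𝐅 • y = 0)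
    (hx : IsWeightVector n q l' τ x) (hFx : 𝐅 • x = 𝐄 ^ D • y)
    (hw : w ∈ Submodule.span (U k n q) {x}) : w ∈ orbitSpan 𝐄 (Submodule.span k {x, y}) := by
  rw [← span_restrictScalars_eq_orbitSpan h4 hq, Submodule.restrictScalars_mem]
  · exact Submodule.span_mono (by simpa using Submodule.subset_span (Set.mem_insert x {y})) hw
  all_goals
    simp only [Submodule.mem_span_pair, forall_exists_index]
    rintro _ a b rfl
  · exact ⟨a * l', b * l, by rw [smul_add, smul_comm _ a, smul_comm _ b, hx.1, hy.1, smul_smul,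
      smul_smul]⟩
  · exact ⟨a * τ, b * σ, by rw [smul_add, smul_comm _ a, smul_comm _ b, hx.2, hy.2, smul_smul,
      smul_smul]⟩
  · rw [smul_add, smul_comm _ a, smul_comm _ b, hFx, hFy, smul_zero, add_zero]
    exact Submodule.smul_mem _ a
      (pow_smul_mem_orbitSpan _ (Submodule.mem_span_pair.2 ⟨0, 1, by simp⟩) D)

theorem pow_succ_E_smul_mem_of_F_smul_eq {D D' : ℕ} {σ τ : k} {x y : M}
    (h4 : 4 ∣ n) (hq : IsPrimitiveRoot q (n ^ 2)) (hD : D + D' + 2 = n ^ 2)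
    (hy : IsLowestWeightVector n q D σ y) (hne : 𝐄 ^ (n ^ 2 - 1) • y ≠ 0)
    (hx : IsWeightVector n q (q ^ D') τ x) (hF : 𝐅 • x = 𝐄 ^ D • y)
    {Q : Submodule (U k n q) M} (hQ : Q ≤ Submodule.span (U k n q) {x}) (hQ₀ : Q ≠ ⊥) :
    𝐄 ^ (D + 1) • y ∈ Q := by
  have h2 : 2 ∣ n := (by norm_num : 2 ∣ 4).trans h4
  obtain ⟨hz, c, hc, hFE⟩ := hy.exists_pow_F_smul_pow_pred_E_smul h2 hq hD hne
  obtain ⟨d, hd, hFEx⟩ := exists_pow_F_smul_pow_E_smul_of_F_smul_eq h2 hq hD hy hne hx hF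
  have hFEy : 𝐅 ^ (n ^ 2 - 1) • 𝐄 ^ (n ^ 2 - 1) • y = 0 := by
    rw [show 𝐅 ^ (n ^ 2 - 1) = 𝐅 ^ D * 𝐅 * 𝐅 ^ D' by
      rw [← pow_succ, ← pow_add, show D + 1 + D' = n ^ 2 - 1 by omega], mul_smul, hFE, smul_comm,
      mul_smul, hz.F_smul, smul_zero, smul_zero]
  obtain ⟨w, hw, hw₀⟩ := Q.exists_mem_ne_zero_of_ne_bot hQ₀
  obtain ⟨m, v, hv, hv₀, hEv⟩ : ∃ m, ∃ v ∈ Submodule.span k {x, y}, v ≠ 0 ∧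
      𝐄 ^ m • w = 𝐄 ^ (n ^ 2 - 1) • v := by
    refine exists_pow_smul_eq_of_mem_orbitSpan (fun v _ => ?_) ?_ hw₀
    · rw [Nat.sub_add_cancel NeZero.one_le, E_pow, zero_smul]
    · exact mem_orbitSpan_of_F_smul_eq h4 hq hy.isWeightVector hy.F_smul hx hF (hQ hw)
  obtain ⟨a, b, rfl⟩ := Submodule.mem_span_pair.1 hv
  have hmem {r : k} {N : ℕ} (hr : r ≠ 0)
      (h : 𝐅 ^ N • 𝐄 ^ (n ^ 2 - 1) • (a • x + b • y) = r • 𝐄 ^ (D + 1) • y) :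
      𝐄 ^ (D + 1) • y ∈ Q := by
    rw [← inv_smul_smul₀ hr (_ • y), ← h, ← hEv]
    exact Q.smul_of_tower_mem _ (Q.smul_mem _ (Q.smul_mem _ hw))
  rcases eq_or_ne a 0 with rfl | ha
  · rw [zero_smul, zero_add] at hv₀ hmem
    refine hmem (N := D') (mul_ne_zero (left_ne_zero_of_smul hv₀) hc) ?_
    rw [smul_comm _ b, smul_comm _ b, hFE, smul_smul]
  · refine hmem (N := n ^ 2 - 1) (mul_ne_zero ha hd) ?_
    rw [smul_add, smul_add, smul_comm _ a, smul_comm _ a, hFEx, smul_comm _ b, smul_comm _ b, hFEy,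
      smul_zero, add_zero, smul_smul]

end Socle

section SocleOfLeftIdeal

variable {k : Type} [Field k] {n : ℕ} {q : k} {i j : ℕ}

local notation "𝐄" => E k n q

variable (k n q) in
/-- The generator of the socle of `P_{2i,j}`, obtained by raising the lowest weight vector
`α_{2i,j}` of weight `q^(2i-2)` one step beyond `β_{2i,j}`. -/
def socleVec (i j : ℕ) : U k n q := 𝐄 ^ (2 * i - 1) * alpha k n q i j

lemma socleVec_eq_smul (hi₁ : 1 ≤ i) :
    socleVec k n q i j = 𝐄 ^ (2 * i - 2 + 1) • alpha k n q i j := by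
  rw [socleVec, smul_eq_mul, show 2 * i - 2 + 1 = 2 * i - 1 by omega]

lemma pow_E_smul_socleVec (hi₁ : 1 ≤ i) (hi : 2 * i ≤ n ^ 2) :
    𝐄 ^ (n ^ 2 - 2 * i + 1) • socleVec k n q i j = 0 := by
  rw [socleVec, smul_eq_mul, ← mul_assoc, ← pow_add,
    show n ^ 2 - 2 * i + 1 + (2 * i - 1) = n ^ 2 by omega, E_pow, zero_mul]

variable [NeZero n]

lemma isLowestWeightVector_socleVec (h4 : 4 ∣ n) (hq : IsPrimitiveRoot q (n ^ 2)) (hi₁ : 1 ≤ i)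
    (hi : 2 * i ≤ n ^ 2) (hj : j ≤ 1) :
    IsLowestWeightVector n q (n ^ 2 - 2 * i) ((-1) ^ j) (socleVec k n q i j) := by
  have hodd : Odd (2 * i - 2 + 1) := ⟨i - 1, by omega⟩
  have hD : 2 * i - 2 + (n ^ 2 - 2 * i) + 2 = n ^ 2 := by omega
  have h := ((isLowestWeightVector_alpha h4 hq hi₁ hj).exists_pow_F_smul_pow_pred_E_smul
    ((by norm_num : 2 ∣ 4).trans h4) hq hD
    (E_pow_mul_F_pow_mul_eIdem_ne_zero h4 hq i hj)).1
  rwa [hodd.neg_one_pow, neg_one_mul, neg_neg, ← socleVec_eq_smul hi₁] at h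

lemma socleVec_mem_P (h4 : 4 ∣ n) (hq : IsPrimitiveRoot q (n ^ 2)) (hi₁ : 1 ≤ i)
    (hi : 2 * i ≤ n ^ 2) : socleVec k n q i j ∈ P k n q i j := by
  have hmem : 𝐄 • F k n q • gam k n q i j ∈ P k n q i j :=
    Submodule.smul_mem _ _ (Submodule.smul_mem _ _ (Submodule.mem_span_singleton_self _))
  rwa [smul_eq_mul (F k n q), (gam_mem_pbw_and_F_mul_gam h4 hq hi₁ hi j).2, beta, smul_eq_mul,
    ← mul_assoc, ← pow_succ', ← smul_eq_mul, ← socleVec_eq_smul hi₁] at hmem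

lemma isSimpleModule_span_socleVec (h4 : 4 ∣ n) (hq : IsPrimitiveRoot q (n ^ 2)) (hi₁ : 1 ≤ i)
    (hi : 2 * i ≤ n ^ 2) (hj : j ≤ 1) :
    IsSimpleModule (U k n q) (Submodule.span (U k n q) {socleVec k n q i j}) :=
  (isLowestWeightVector_socleVec h4 hq hi₁ hi hj).isSimpleModule_span h4 hq (by omega)
    (pow_E_smul_socleVec hi₁ hi)

theorem S_eq_span (h4 : 4 ∣ n) (hq : IsPrimitiveRoot q (n ^ 2)) (hi₁ : 1 ≤ i)
    (hi : 2 * i ≤ n ^ 2) (hj : j ≤ 1) :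
    S k n q i j = Submodule.span (U k n q) {socleVec k n q i j} := by
  have := isSimpleModule_span_socleVec h4 hq hi₁ hi hj
  refine sSup_isSimpleModule_eq ?_ fun Q hQ hQ₀ => ?_ <;>
    rw [Submodule.span_singleton_le_iff_mem]
  · exact socleVec_mem_P h4 hq hi₁ hi
  · have hD : 2 * i - 2 + (n ^ 2 - 2 * i) + 2 = n ^ 2 := by omega
    rw [socleVec_eq_smul hi₁]
    exact pow_succ_E_smul_mem_of_F_smul_eq h4 hq hD
      (isLowestWeightVector_alpha h4 hq hi₁ hj) (E_pow_mul_F_pow_mul_eIdem_ne_zero h4 hq i hj)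
      (isWeightVector_gam h4 hq hi₁ hi hj) (gam_mem_pbw_and_F_mul_gam h4 hq hi₁ hi j).2 hQ hQ₀

theorem isSimpleModule_S (h4 : 4 ∣ n) (hq : IsPrimitiveRoot q (n ^ 2)) (hi₁ : 1 ≤ i)
    (hi : 2 * i ≤ n ^ 2) (hj : j ≤ 1) : IsSimpleModule (U k n q) (S k n q i j) := by
  rw [S_eq_span h4 hq hi₁ hi hj]
  exact isSimpleModule_span_socleVec h4 hq hi₁ hi hj

theorem finrank_S (h4 : 4 ∣ n) (hq : IsPrimitiveRoot q (n ^ 2)) (hi₁ : 1 ≤ i)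
    (hi : 2 * i ≤ n ^ 2) (hj : j ≤ 1) :
    Module.finrank k (S k n q i j) = n ^ 2 - 2 * i + 1 := by
  rw [S_eq_span h4 hq hi₁ hi hj]
  exact (isLowestWeightVector_socleVec h4 hq hi₁ hi hj).finrank_span h4 hq (by omega)
    (pow_E_smul_socleVec hi₁ hi)

theorem exists_isLowestWeightVector_S (h4 : 4 ∣ n) (hq : IsPrimitiveRoot q (n ^ 2))
    (hi₁ : 1 ≤ i) (hi : 2 * i ≤ n ^ 2) (hj : j ≤ 1) :
    ∃ v : S k n q i j, IsLowestWeightVector n q (n ^ 2 - 2 * i) ((-1) ^ j) v := by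
  have hz := isLowestWeightVector_socleVec h4 hq hi₁ hi hj
  have hmem : socleVec k n q i j ∈ S k n q i j := by
    rw [S_eq_span h4 hq hi₁ hi hj]
    exact Submodule.mem_span_singleton_self _
  exact ⟨⟨_, hmem⟩, fun h => hz.ne_zero (congrArg Subtype.val h),
    ⟨Subtype.ext hz.isWeightVector.1, Subtype.ext hz.isWeightVector.2⟩, Subtype.ext hz.F_smul⟩

theorem exists_linearEquiv_S (h4 : 4 ∣ n) (hq : IsPrimitiveRoot q (n ^ 2)) (M : Type*)
    [AddCommGroup M] [Module (U k n q) M] [IsSimpleModule (U k n q) M] :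
    ∃ i j : ℕ, 1 ≤ i ∧ i ≤ n ^ 2 / 2 ∧ j ≤ 1 ∧ Nonempty (M ≃ₗ[U k n q] S k n q i j) := by
  let _ : Module k M := Module.compHom M (algebraMap k (U k n q))
  have : IsScalarTower k (U k n q) M := IsScalarTower.of_algebraMap_smul fun _ _ => rfl
  have : Nontrivial M := IsSimpleModule.nontrivial (U k n q) M
  obtain ⟨i, j, hi₁, hi, hj, v, hv⟩ :=
    exists_isLowestWeightVector (M := M) ((by norm_num : 2 ∣ 4).trans h4) hq
  obtain ⟨v', hv'⟩ := exists_isLowestWeightVector_S h4 hq hi₁ (by omega) hj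
  have := isSimpleModule_S h4 hq hi₁ (by omega) hj
  have hD : n ^ 2 - 2 * i < n ^ 2 := Nat.sub_lt (NeZero.pos _) (by omega)
  exact ⟨i, j, hi₁, hi, hj, hv.nonempty_linearEquiv h4 hq hD hv'⟩

end SocleOfLeftIdeal

end QFL

open QFL in
theorem statement10_general (k : Type) [Field k] (n : ℕ) (hn : 0 < n) (h4 : 4 ∣ n) (q : k)
    (hq : IsPrimitiveRoot q (n ^ 2)) :
    (∀ i j : ℕ, 1 ≤ i → i ≤ n ^ 2 / 2 → j ≤ 1 →
      IsSimpleModule (U k n q) (S k n q i j) ∧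
      Module.finrank k (S k n q i j) = n ^ 2 - 2 * i + 1 ∧
      Odd (Module.finrank k (S k n q i j))) ∧
    (∀ (M : Type*) (_ : AddCommGroup M) (_ : Module (U k n q) M),
      IsSimpleModule (U k n q) M →
      ∃ i j : ℕ, 1 ≤ i ∧ i ≤ n ^ 2 / 2 ∧ j ≤ 1 ∧
        Nonempty (M ≃ₗ[U k n q] (S k n q i j))) := by
  have : NeZero n := ⟨hn.ne'⟩
  refine ⟨fun i j hi₁ hi hj => ?_, fun M _ _ _ => exists_linearEquiv_S h4 hq M⟩
  have hi' : 2 * i ≤ n ^ 2 := by omega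
  have heven : Even (n ^ 2) := even_iff_two_dvd.2
    (((by norm_num : 2 ∣ 4).trans h4).trans (dvd_pow_self n two_ne_zero))
  have hdim := finrank_S h4 hq hi₁ hi' hj
  refine ⟨isSimpleModule_S h4 hq hi₁ hi' hj, hdim, ?_⟩
  rw [hdim]
  exact (heven.tsub (even_two_mul i)).add_one

open QFL in
/-- Corollary 2.13 (b), (d): the `S_{2i,j}` form a complete list of the non-isomorphic
simple left `ũ_q(sl₂)`-modules; `S_{2i,j}` has `k`-dimension `n²-2i+1`, which is odd. -/
theorem statement10 (k : Type) [Field k] [IsAlgClosed k] [CharZero k]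
    (n : ℕ) (hn : 0 < n) (h4 : 4 ∣ n) (q : k) (hq : IsPrimitiveRoot q (n ^ 2)) :
    (∀ i j : ℕ, 1 ≤ i → i ≤ n ^ 2 / 2 → j ≤ 1 →
      IsSimpleModule (U k n q) (S k n q i j) ∧
      Module.finrank k (S k n q i j) = n ^ 2 - 2 * i + 1 ∧
      Odd (Module.finrank k (S k n q i j))) ∧
    (∀ (M : Type) (_ : AddCommGroup M) (_ : Module (U k n q) M),
      IsSimpleModule (U k n q) M →
      ∃ i j : ℕ, 1 ≤ i ∧ i ≤ n ^ 2 / 2 ∧ j ≤ 1 ∧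
        Nonempty (M ≃ₗ[U k n q] (S k n q i j))) :=
  statement10_general k n hn h4 q hq
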